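/- arXiv:2006.11420 — 5 statements merged into one kernel-verified Lean document; each statement's English description precedes it below -/
import Mathlib

section
/- Let β = r/s be a rational number with r > s > 0 and gcd(r, s) = 1, and let F, G ∈ ℝ[X, Y] be β-quasihomogeneous polynomials of degree d ≥ 1 with height functions f₊, f₋ and g₊, g₋ respectively. Let λ₁, λ₂ be nonzero real numbers with λ₁λ₂ > 0 and let φ₁, φ₂ : ℝ → ℝ be bi-Lipschitz homeomorphisms such that: if λ₁ > 0 and λ₂ > 0 then |λ₁|^d·(g₊ ∘ φ₁) = f₊ and |λ₂|^d·(g₋ ∘ φ₂) = f₋, while if λ₁ < 0 and λ₂ < 0 then |λ₁|^d·(g₋ ∘ φ₁) = f₊ and |λ₂|^d·(g₊ ∘ φ₂) = f₋. Suppose moreover there are real numbers L₁, L₂ with φᵢ(t)/t → Lᵢ as |t| → +∞ and |λ₁|^β·L₁ = |λ₂|^β·L₂. Define Φ : ℝ² → ℝ² by Φ(x, y) := (λ₁x, |λ₁|^β·x^β·φ₁(y/x^β)) for x > 0, Φ(x, y) := (λ₂x, |λ₂|^β·|x|^β·φ₂(y/|x|^β)) for x < 0, and Φ(0, y) := (0,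 |λ₁|^β·L₁·y). Then G(Φ(x, y)) = F(x, y) for all (x, y) ∈ ℝ². -/
open Filter Topology

/-- Evaluation of a polynomial in two variables at the point `(x, y)`. -/
noncomputable def eval2 (F : MvPolynomial (Fin 2) ℝ) (x y : ℝ) : ℝ :=
  MvPolynomial.eval ![x, y] F

/-! Off the axis `x = 0`, a quasihomogeneous function is `|x| ^ d` times a height function
evaluated at `y / |x| ^ β`, so there the relation between the height functions is the identity
`G ∘ Φ = F`. Since `φ₁ t / t → L₁`, the quantity `x ^ β * φ₁ (y / x ^ β)` tends to `L₁ * y` as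
`x → 0⁺`; hence `Φ (x, y) → Φ (0, y)` and the identity extends to the axis by continuity. -/

/-- A function of two real variables is `β`-quasihomogeneous of degree `d` if
`F (t x, t ^ β y) = t ^ d F (x, y)` for all `t > 0`. The function need not be polynomial and the
degree may be any real number; the height functions of `F` are `F 1` and `F (-1)`. -/
def IsQuasihomogeneous (β d : ℝ) (F : ℝ → ℝ → ℝ) : Prop :=
  ∀ t x y : ℝ, 0 < t → F (t * x) (t ^ β * y) = t ^ d * F x y

namespace IsQuasihomogeneous

variable {β d l x : ℝ} {F G : ℝ → ℝ → ℝ} {φ : ℝ → ℝ}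

theorem apply_abs_rpow_mul (hF : IsQuasihomogeneous β d F) (hx : x ≠ 0) (y : ℝ) :
    F x (|x| ^ β * y) = |x| ^ d * F (SignType.sign x) y := by
  simpa only [abs_mul_sign] using hF |x| (SignType.sign x) y (abs_pos.mpr hx)

theorem apply_eq_of_height_eq (hF : IsQuasihomogeneous β d F) (hG : IsQuasihomogeneous β d G)
    (hl : l ≠ 0) (hx : x ≠ 0)
    (height_eq : ∀ t, |l| ^ d * G (SignType.sign (l * x)) (φ t) = F (SignType.sign x) t) (y : ℝ) :
    G (l * x) (|l| ^ β * |x| ^ β * φ (y / |x| ^ β)) = F x y := by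
  have abs_mul_rpow (a : ℝ) : |l * x| ^ a = |l| ^ a * |x| ^ a := by
    rw [abs_mul, Real.mul_rpow (abs_nonneg l) (abs_nonneg x)]
  calc G (l * x) (|l| ^ β * |x| ^ β * φ (y / |x| ^ β))
      = |x| ^ d * (|l| ^ d * G (SignType.sign (l * x)) (φ (y / |x| ^ β))) := by
        rw [← abs_mul_rpow, hG.apply_abs_rpow_mul (mul_ne_zero hl hx), abs_mul_rpow]
        ring
    _ = F x (|x| ^ β * (y / |x| ^ β)) := by rw [height_eq, hF.apply_abs_rpow_mul hx]
    _ = F x y := by rw [mul_div_cancel₀ y (Real.rpow_pos_of_pos (abs_pos.mpr hx) β).ne']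

end IsQuasihomogeneous

theorem tendsto_mul_apply_div_nhdsNE_zero {𝕜 : Type*} [NormedField 𝕜] {φ : 𝕜 → 𝕜} {L : 𝕜}
    (hφ : Tendsto (fun t => φ t / t) (Bornology.cobounded 𝕜) (𝓝 L)) (y : 𝕜) :
    Tendsto (fun c => c * φ (y / c)) (𝓝[≠] 0) (𝓝 (L * y)) := by
  rcases eq_or_ne y 0 with rfl | hy
  · simpa using ((continuous_mul_const (φ 0)).tendsto 0).mono_left nhdsWithin_le_nhds
  have quotient_unbounded : Tendsto (fun c => y / c) (𝓝[≠] 0) (Bornology.cobounded 𝕜) := by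
    simpa only [div_eq_mul_inv, Function.comp_def] using
      (tendsto_mul_left_cobounded hy).comp tendsto_inv₀_nhdsNE_zero
  refine ((hφ.comp quotient_unbounded).mul_const y).congr' ?_
  filter_upwards [self_mem_nhdsWithin] with c hc
  have hc' : c ≠ 0 := hc
  simp only [Function.comp_apply]
  field_simp

theorem tendsto_rpow_nhdsGT_zero {β : ℝ} (hβ : 0 < β) :
    Tendsto (fun x : ℝ => x ^ β) (𝓝[>] 0) (𝓝[>] 0) := by
  refine tendsto_nhdsWithin_iff.mpr ⟨?_, ?_⟩
  · simpa only [Real.zero_rpow hβ.ne'] using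
      (Real.continuousAt_rpow_const 0 β (Or.inr hβ.le)).tendsto.mono_left nhdsWithin_le_nhds
  · filter_upwards [self_mem_nhdsWithin] with x hx using Real.rpow_pos_of_pos hx β

theorem tendsto_rpow_mul_apply_div_rpow {β : ℝ} (hβ : 0 < β) {φ : ℝ → ℝ} {L : ℝ}
    (hφ : Tendsto (fun t => φ t / t) (Bornology.cobounded ℝ) (𝓝 L)) (y : ℝ) :
    Tendsto (fun x : ℝ => x ^ β * φ (y / x ^ β)) (𝓝[>] 0) (𝓝 (L * y)) :=
  (tendsto_mul_apply_div_nhdsNE_zero hφ y).comp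
    ((tendsto_rpow_nhdsGT_zero hβ).mono_right (nhdsGT_le_nhdsNE 0))

theorem tendsto_inverse_transform_nhdsGT_zero {β : ℝ} (hβ : 0 < β) {φ : ℝ → ℝ} {L : ℝ}
    (hφ : Tendsto (fun t => φ t / t) (Bornology.cobounded ℝ) (𝓝 L)) (l y : ℝ) :
    Tendsto (fun x : ℝ => (l * x, |l| ^ β * x ^ β * φ (y / x ^ β))) (𝓝[>] 0)
      (𝓝 (0, |l| ^ β * L * y)) := by
  have fst_tendsto : Tendsto (fun x => l * x) (𝓝[>] 0) (𝓝 0) := by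
    simpa only [mul_zero] using
      ((continuous_const_mul l).tendsto 0).mono_left nhdsWithin_le_nhds
  simpa only [mul_assoc] using
    fst_tendsto.prodMk_nhds ((tendsto_rpow_mul_apply_div_rpow hβ hφ y).const_mul (|l| ^ β))

theorem continuous_eval2 (F : MvPolynomial (Fin 2) ℝ) :
    Continuous (Function.uncurry (eval2 F)) :=
  (MvPolynomial.continuous_eval F).comp (by fun_prop)

theorem stmt_11_general {β d : ℝ} (hβ : 0 < β) {F G : ℝ → ℝ → ℝ}
    (hFcont : Continuous (Function.uncurry F)) (hGcont : Continuous (Function.uncurry G))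
    (hF : IsQuasihomogeneous β d F) (hG : IsQuasihomogeneous β d G)
    {l1 l2 : ℝ} (hl1 : l1 ≠ 0) (hl2 : l2 ≠ 0) {φ1 φ2 : ℝ → ℝ}
    (height_right : ∀ t, |l1| ^ d * G (SignType.sign l1) (φ1 t) = F 1 t)
    (height_left : ∀ t, |l2| ^ d * G (-SignType.sign l2) (φ2 t) = F (-1) t)
    {L : ℝ} (hφ1 : Tendsto (fun t => φ1 t / t) (Bornology.cobounded ℝ) (𝓝 L))
    {Φ : ℝ × ℝ → ℝ × ℝ}
    (hΦpos : ∀ x y : ℝ, 0 < x → Φ (x, y) = (l1 * x, |l1| ^ β * x ^ β * φ1 (y / x ^ β)))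
    (hΦneg : ∀ x y : ℝ, x < 0 → Φ (x, y) = (l2 * x, |l2| ^ β * |x| ^ β * φ2 (y / |x| ^ β)))
    (hΦ0 : ∀ y : ℝ, Φ (0, y) = (0, |l1| ^ β * L * y)) (x y : ℝ) :
    G (Φ (x, y)).1 (Φ (x, y)).2 = F x y := by
  have eq_right (x : ℝ) (hx : 0 < x) : G (Φ (x, y)).1 (Φ (x, y)).2 = F x y := by
    rw [hΦpos x y hx]
    simpa only [abs_of_pos hx] using hF.apply_eq_of_height_eq hG hl1 hx.ne'
      (by simpa [sign_mul, sign_pos hx] using height_right) y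
  rcases lt_trichotomy x 0 with hx | rfl | hx
  · rw [hΦneg x y hx]
    exact hF.apply_eq_of_height_eq hG hl2 hx.ne
      (by simpa [sign_mul, sign_neg hx] using height_left) y
  · have Φ_tendsto : Tendsto (fun x => Φ (x, y)) (𝓝[>] 0) (𝓝 (Φ (0, y))) := by
      rw [hΦ0]
      refine (tendsto_inverse_transform_nhdsGT_zero hβ hφ1 l1 y).congr' ?_
      filter_upwards [self_mem_nhdsWithin] with x hx using (hΦpos x y hx).symm
    have F_tendsto : Tendsto (fun x => F x y) (𝓝[>] 0) (𝓝 (F 0 y)) :=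
      ((hFcont.comp (.prodMk_left y)).tendsto 0).mono_left nhdsWithin_le_nhds
    refine tendsto_nhds_unique_of_eventuallyEq ((hGcont.tendsto _).comp Φ_tendsto) F_tendsto ?_
    filter_upwards [self_mem_nhdsWithin] with x hx using eq_right x hx
  · exact eq_right x hx

/-- If the height functions of two β-quasihomogeneous polynomials `F, G` of degree
`d ≥ 1` are related by a β-transition `(λ, φ)`, then `G ∘ Φ = F`, where `Φ` is the
inverse β-transform of `(λ, φ)`. -/
theorem stmt_11 (r s d : ℕ) (hrs : s < r) (hs : 0 < s) (hgcd : Nat.gcd r s = 1)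
    (hd : 1 ≤ d) (β : ℝ) (hβ : β = (r : ℝ) / (s : ℝ))
    (F G : MvPolynomial (Fin 2) ℝ)
    (hF : ∀ t x y : ℝ, 0 < t → eval2 F (t * x) (t ^ β * y) = t ^ d * eval2 F x y)
    (hG : ∀ t x y : ℝ, 0 < t → eval2 G (t * x) (t ^ β * y) = t ^ d * eval2 G x y)
    (l1 l2 : ℝ) (hl1 : l1 ≠ 0) (hl2 : l2 ≠ 0) (hll : 0 < l1 * l2)
    (φ1 φ2 : ℝ → ℝ)
    (hφ1bij : Function.Bijective φ1) (hφ1lip : ∃ K : NNReal, LipschitzWith K φ1)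
    (hφ1inv : ∃ K : NNReal, LipschitzWith K (Function.invFun φ1))
    (hφ2bij : Function.Bijective φ2) (hφ2lip : ∃ K : NNReal, LipschitzWith K φ2)
    (hφ2inv : ∃ K : NNReal, LipschitzWith K (Function.invFun φ2))
    (hpos : 0 < l1 → 0 < l2 →
      (∀ t : ℝ, |l1| ^ d * eval2 G 1 (φ1 t) = eval2 F 1 t) ∧
      (∀ t : ℝ, |l2| ^ d * eval2 G (-1) (φ2 t) = eval2 F (-1) t))
    (hneg : l1 < 0 → l2 < 0 →
      (∀ t : ℝ, |l1| ^ d * eval2 G (-1) (φ1 t) = eval2 F 1 t) ∧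
      (∀ t : ℝ, |l2| ^ d * eval2 G 1 (φ2 t) = eval2 F (-1) t))
    (L1 L2 : ℝ)
    (hL1top : Tendsto (fun t => φ1 t / t) atTop (𝓝 L1))
    (hL1bot : Tendsto (fun t => φ1 t / t) atBot (𝓝 L1))
    (hL2top : Tendsto (fun t => φ2 t / t) atTop (𝓝 L2))
    (hL2bot : Tendsto (fun t => φ2 t / t) atBot (𝓝 L2))
    (hLL : |l1| ^ β * L1 = |l2| ^ β * L2)
    (Φ : ℝ × ℝ → ℝ × ℝ)
    (hΦpos : ∀ x y : ℝ, 0 < x →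
      Φ (x, y) = (l1 * x, |l1| ^ β * x ^ β * φ1 (y / x ^ β)))
    (hΦneg : ∀ x y : ℝ, x < 0 →
      Φ (x, y) = (l2 * x, |l2| ^ β * |x| ^ β * φ2 (y / |x| ^ β)))
    (hΦ0 : ∀ y : ℝ, Φ (0, y) = (0, |l1| ^ β * L1 * y)) :
    ∀ x y : ℝ, eval2 G (Φ (x, y)).1 (Φ (x, y)).2 = eval2 F x y := by
  have hβ0 : 0 < β := hβ ▸ div_pos (Nat.cast_pos.mpr (hs.trans hrs)) (Nat.cast_pos.mpr hs)
  have heights :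
      (∀ t, |l1| ^ (d : ℝ) * eval2 G (SignType.sign l1) (φ1 t) = eval2 F 1 t) ∧
      (∀ t, |l2| ^ (d : ℝ) * eval2 G (-SignType.sign l2) (φ2 t) = eval2 F (-1) t) := by
    rcases mul_pos_iff.mp hll with ⟨h1, h2⟩ | ⟨h1, h2⟩
    · simpa [sign_pos h1, sign_pos h2] using hpos h1 h2
    · simpa [sign_neg h1, sign_neg h2] using hneg h1 h2
  exact stmt_11_general hβ0 (continuous_eval2 F) (continuous_eval2 G)
    (by simpa only [IsQuasihomogeneous, Real.rpow_natCast] using hF)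
    (by simpa only [IsQuasihomogeneous, Real.rpow_natCast] using hG)
    hl1 hl2 heights.1 heights.2
    (by simpa only [IsOrderBornology.cobounded_eq] using hL1bot.sup hL1top)
    hΦpos hΦneg hΦ0
end

section
/- Let φ : ℝ → ℝ be a bi-Lipschitz homeomorphism such that g ∘ φ = f for some nonconstant real polynomial functions f, g : ℝ → ℝ. Then φ is differentiable on ℝ and the function t ↦ φ(t) − t·φ′(t) is bounded on ℝ; moreover the limit of φ(t) − t·φ′(t) as |t| → +∞ exists and is finite. -/
open Filter Topology

/-!
The equation `q ∘ φ = p` is compared with monomials, near each point and near infinity.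
At a point `a`, cancelling the zero of `q - q (φ a)` at `φ a` shows that a power of the slope
`(φ t - φ a) / (t - a)` converges; as `φ` is monotone the slope is nonnegative, so it converges too.
Near infinity `p` and `q` have the same degree `n`, and in the same way `t / φ t` converges.
Differentiating `q ∘ φ = p` and eliminating `n q(φ) = n p` gives
`q'(φ) (φ - t φ') = (n p - t p') - (n q(φ) - φ q'(φ))`.
Both differences on the right are polynomials of degree less than `n`, in `t` and in `φ`, while
`q'(φ)` has degree exactly `n - 1` in `φ`, so the quotient converges.
-/

open Asymptotics Bornology Polynomial

theorem tendsto_rpow_inv_of_tendsto_pow {α : Type*} {l : Filter α} {f : α → ℝ} {c : ℝ} {n : ℕ}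
    (hn : n ≠ 0) (hf : ∀ᶠ x in l, 0 ≤ f x) (h : Tendsto (fun x => f x ^ n) l (𝓝 c)) :
    Tendsto f l (𝓝 (c ^ (n : ℝ)⁻¹)) := by
  refine (h.rpow_const (p := (n : ℝ)⁻¹) (Or.inr (by positivity))).congr' ?_
  filter_upwards [hf] with x hx
  exact Real.pow_rpow_inv_natCast hx hn

section LocalRegularity

theorem le_analyticOrderAt_of_isBigO {𝕜 E : Type*} [NontriviallyNormedField 𝕜]
    [NormedAddCommGroup E] [NormedSpace 𝕜 E] {f : 𝕜 → E} {a : 𝕜} {n : ℕ}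
    (hf : AnalyticAt 𝕜 f a) (hO : f =O[𝓝[≠] a] fun z => (z - a) ^ n) :
    n ≤ analyticOrderAt f a := by
  by_contra! hlt
  obtain ⟨m, hm⟩ := ENat.ne_top_iff_exists.mp hlt.ne_top
  obtain ⟨g, hg, hga, hfg⟩ := hf.analyticOrderAt_eq_natCast.mp hm.symm
  rw [← hm, Nat.cast_lt] at hlt
  have hgnorm : ∀ᶠ z in 𝓝 a, ‖g a‖ / 2 ≤ ‖g z‖ :=
    hg.continuousAt.norm.tendsto.eventually_const_le (half_lt_self (norm_pos_iff.mpr hga))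
  have hone : (fun _ => (1 : 𝕜)) =O[𝓝[≠] a] g :=
    (isBigO_const_left_iff_pos_le_norm one_ne_zero).mpr
      ⟨‖g a‖ / 2, by positivity, nhdsWithin_le_nhds hgnorm⟩
  have hpow : (fun z => (z - a) ^ m) =O[𝓝[≠] a] f := by
    refine ((isBigO_refl (fun z => (z - a) ^ m) _).smul hone).congr' (by simp [EventuallyEq]) ?_
    filter_upwards [nhdsWithin_le_nhds hfg] with z hz using hz.symm
  have hlittle : (fun z => (z - a) ^ n) =o[𝓝[≠] a] fun z => (z - a) ^ m := by
    simpa only [← norm_pow, isLittleO_norm_norm] using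
      (isLittleO_pow_sub_pow_sub a hlt).mono nhdsWithin_le_nhds
  have hne : ∀ᶠ z in 𝓝[≠] a, (z - a) ^ m ≠ 0 := by
    filter_upwards [eventually_mem_nhdsWithin] with z hz using pow_ne_zero m (sub_ne_zero.mpr hz)
  exact isLittleO_irrefl hne.frequently ((hpow.trans hO).trans_isLittleO hlittle)

theorem differentiableAt_of_analyticAt_comp {f g φ : ℝ → ℝ} {a : ℝ} (hf : AnalyticAt ℝ f a)
    (hg : AnalyticAt ℝ g (φ a)) (hg_const : ¬∀ᶠ y in 𝓝 (φ a), g y = g (φ a))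
    (hcomp : ∀ᶠ t in 𝓝 a, g (φ t) = f t) (hφ : (fun t => φ t - φ a) =O[𝓝 a] fun t => t - a)
    (hslope : ∀ᶠ t in 𝓝[≠] a, 0 ≤ slope φ a t) : DifferentiableAt ℝ φ a := by
  have hcont : Tendsto φ (𝓝 a) (𝓝 (φ a)) :=
    tendsto_sub_nhds_zero_iff.mp <| hφ.trans_tendsto <| tendsto_sub_nhds_zero_iff.mpr tendsto_id
  obtain ⟨k, v, hv, hva, hgv⟩ :=
    (hg.fun_sub analyticAt_const).exists_eventuallyEq_pow_smul_nonzero_iff.mpr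
      (by simpa only [sub_eq_zero] using hg_const)
  have hk : k ≠ 0 := by
    rintro rfl
    exact hva (by simpa using hgv.self_of_nhds.symm)
  have hvφ : Tendsto (fun t => v (φ t)) (𝓝 a) (𝓝 (v (φ a))) := hv.continuousAt.tendsto.comp hcont
  have hfφ : ∀ᶠ t in 𝓝 a, (φ t - φ a) ^ k * v (φ t) = f t - f a := by
    filter_upwards [hcomp, hcont.eventually hgv] with t ht hgt
    rw [← ht, ← hcomp.self_of_nhds, hgt, smul_eq_mul]
  have hfO : (fun t => f t - f a) =O[𝓝 a] fun t => (t - a) ^ k := by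
    simpa using ((hφ.pow k).mul (hvφ.isBigO_one ℝ)).congr' hfφ .rfl
  obtain ⟨u, hu, hfu⟩ := (natCast_le_analyticOrderAt (hf.fun_sub analyticAt_const)).mp <|
    le_analyticOrderAt_of_isBigO (hf.fun_sub analyticAt_const) (hfO.mono nhdsWithin_le_nhds)
  have hpow : Tendsto (fun t => slope φ a t ^ k) (𝓝[≠] a) (𝓝 (u a / v (φ a))) := by
    refine ((hu.continuousAt.tendsto.div hvφ hva).mono_left nhdsWithin_le_nhds).congr' ?_
    filter_upwards [nhdsWithin_le_nhds hfφ, nhdsWithin_le_nhds hfu,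
      nhdsWithin_le_nhds (hvφ.eventually_ne hva), eventually_mem_nhdsWithin] with t h₁ h₂ hvt hta
    have hta' : t - a ≠ 0 := sub_ne_zero.mpr hta
    rw [slope_def_field, div_pow, Pi.div_apply, div_eq_div_iff hvt (pow_ne_zero k hta'), h₁, h₂,
      smul_eq_mul, mul_comm]
  exact (hasDerivAt_iff_tendsto_slope.mpr
    (tendsto_rpow_inv_of_tendsto_pow hk hslope hpow)).differentiableAt

theorem not_eventually_eval_eq {𝕜 : Type*} [NontriviallyNormedField 𝕜] {q : 𝕜[X]}
    (hq : q.natDegree ≠ 0) (a c : 𝕜) : ¬∀ᶠ y in 𝓝 a, q.eval y = c := by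
  intro h
  have hqc : q = C c := eq_of_infinite_eval_eq q (C c) <| by
    simpa only [eval_C] using infinite_of_mem_nhds a h
  exact hq (by rw [hqc, natDegree_C])

theorem isBigO_sub_of_locallyLipschitz {E F : Type*} [SeminormedAddCommGroup E]
    [SeminormedAddCommGroup F] {φ : E → F} (hφ : LocallyLipschitz φ) (a : E) :
    (fun t => φ t - φ a) =O[𝓝 a] fun t => t - a := by
  obtain ⟨K, s, hs, hK⟩ := hφ a
  refine .of_bound K ?_
  filter_upwards [hs] with t ht
  simpa only [dist_eq_norm] using hK.dist_le_mul t ht a (mem_of_mem_nhds hs)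

theorem slope_nonneg_of_monotone {𝕜 : Type*} [Field 𝕜] [LinearOrder 𝕜] [IsStrictOrderedRing 𝕜]
    {φ : 𝕜 → 𝕜} (hφ : Monotone φ) (a t : 𝕜) : 0 ≤ slope φ a t := by
  rw [slope_def_field]
  rcases le_total a t with h | h
  · exact div_nonneg (sub_nonneg.mpr (hφ h)) (sub_nonneg.mpr h)
  · exact div_nonneg_of_nonpos (sub_nonpos.mpr (hφ h)) (sub_nonpos.mpr h)

theorem differentiable_of_eval_comp_eq {φ : ℝ → ℝ} {p q : ℝ[X]} (hφmono : Monotone φ)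
    (hφlip : LocallyLipschitz φ) (hq : q.natDegree ≠ 0) (heq : ∀ t, q.eval (φ t) = p.eval t) :
    Differentiable ℝ φ := fun a =>
  differentiableAt_of_analyticAt_comp (AnalyticOnNhd.eval_polynomial p a trivial)
    (AnalyticOnNhd.eval_polynomial q (φ a) trivial) (not_eventually_eval_eq hq _ _)
    (.of_forall heq) (isBigO_sub_of_locallyLipschitz hφlip a)
    (.of_forall (slope_nonneg_of_monotone hφmono a))

end LocalRegularity

section Growth

theorem tendsto_eval_div_pow_cobounded {𝕜 : Type*} [NormedField 𝕜] {P : 𝕜[X]} {n : ℕ}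
    (hP : P.natDegree ≤ n) :
    Tendsto (fun t => P.eval t / t ^ n) (cobounded 𝕜) (𝓝 (P.coeff n)) := by
  have hdeg : (P - C (P.coeff n) * X ^ n).degree < (X ^ n : 𝕜[X]).degree := by
    rw [degree_X_pow, degree_lt_iff_coeff_zero]
    intro k hk
    obtain rfl | hlt := hk.eq_or_lt
    · simp
    · simp [coeff_X_pow, hlt.ne', coeff_eq_zero_of_natDegree_lt (hP.trans_lt hlt)]
  have hlim := (isLittleO_cobounded_of_degree_lt hdeg).tendsto_div_nhds_zero.add_const (P.coeff n)
  rw [zero_add] at hlim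
  refine hlim.congr' ?_
  filter_upwards [eventually_ne_cobounded 0] with t ht
  simp only [eval_sub, eval_mul, eval_C, eval_pow, eval_X]
  field_simp
  ring

theorem natDegree_le_of_isBigO_of_eval_comp_eq {𝕜 : Type*} [NontriviallyNormedField 𝕜] {φ : 𝕜 → 𝕜}
    {p q : 𝕜[X]} (hφ : φ =O[cobounded 𝕜] id) (heq : ∀ t, q.eval (φ t) = p.eval t) :
    p.natDegree ≤ q.natDegree := by
  by_contra! hlt
  have hpO : p.eval =O[cobounded 𝕜] fun t => t ^ q.natDegree := by
    simp_rw [← funext heq, eval_eq_sum_range]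
    refine IsBigO.fun_sum fun i hi => ((hφ.pow i).trans ?_).const_mul_left _
    exact isBigO_pow_pow_cobounded_of_le (Nat.lt_succ_iff.mp (Finset.mem_range.mp hi))
  have hlim : Tendsto (fun t => p.eval t / t ^ p.natDegree) (cobounded 𝕜) (𝓝 0) :=
    (hpO.trans_isLittleO (isLittleO_pow_pow_cobounded_of_lt hlt)).tendsto_div_nhds_zero
  have hlead : p.leadingCoeff = 0 :=
    tendsto_nhds_unique (tendsto_eval_div_pow_cobounded le_rfl) hlim
  rw [leadingCoeff_eq_zero] at hlead
  simp [hlead] at hlt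

theorem isBigO_id_cobounded_of_lipschitzWith {E F : Type*} [NormedAddCommGroup E]
    [NormedAddCommGroup F] {φ : E → F} {K : NNReal} (hφ : LipschitzWith K φ) :
    φ =O[cobounded E] id := by
  have hsub : (fun t => φ t - φ 0) =O[cobounded E] id :=
    .of_bound K (.of_forall fun t => by simpa [dist_eq_norm] using hφ.dist_le_mul t 0)
  simpa using hsub.add (isLittleO_const_id_cobounded (φ 0)).isBigO

theorem natDegree_eq_of_eval_comp_eq {𝕜 : Type*} [NontriviallyNormedField 𝕜] {φ ψ : 𝕜 → 𝕜}
    {p q : 𝕜[X]} (hφ : φ =O[cobounded 𝕜] id) (hψ : ψ =O[cobounded 𝕜] id)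
    (hφψ : Function.RightInverse ψ φ) (heq : ∀ t, q.eval (φ t) = p.eval t) :
    p.natDegree = q.natDegree :=
  (natDegree_le_of_isBigO_of_eval_comp_eq hφ heq).antisymm <|
    natDegree_le_of_isBigO_of_eval_comp_eq hψ fun y => by rw [← heq, hφψ]

theorem tendsto_cobounded_of_eval_comp_eq {𝕜 : Type*} [NormedField 𝕜] [ProperSpace 𝕜] {φ : 𝕜 → 𝕜}
    {p q : 𝕜[X]} (hp : p.natDegree ≠ 0) (heq : ∀ t, q.eval (φ t) = p.eval t) :
    Tendsto φ (cobounded 𝕜) (cobounded 𝕜) := by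
  have hproper : Tendsto p.eval (cobounded 𝕜) (cobounded 𝕜) :=
    tendsto_norm_atTop_iff_cobounded.mp <|
      p.tendsto_norm_atTop (natDegree_pos_iff_degree_pos.mp (Nat.pos_of_ne_zero hp))
        tendsto_norm_cobounded_atTop
  rw [Metric.cobounded_eq_cocompact] at hproper ⊢
  exact .of_tendsto_comp (hproper.congr fun t => (heq t).symm) (comap_cocompact_le q.continuous)

theorem eventually_div_nonneg_of_monotone {φ : ℝ → ℝ} (hφ : Monotone φ)
    (hlim : Tendsto φ (cobounded ℝ) (cobounded ℝ)) : ∀ᶠ t in cobounded ℝ, 0 ≤ t / φ t := by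
  have habs : ∀ᶠ t in cobounded ℝ, |φ 0| < |φ t| :=
    (tendsto_norm_cobounded_atTop.comp hlim).eventually_gt_atTop |φ 0|
  filter_upwards [habs] with t ht
  rcases le_total 0 t with h0 | h0
  · refine div_nonneg h0 ?_
    grind [hφ h0]
  · refine div_nonneg_of_nonpos h0 ?_
    grind [hφ h0]

theorem tendsto_div_of_eval_comp_eq {φ : ℝ → ℝ} {p q : ℝ[X]} (hφ : Monotone φ)
    (hq : q.natDegree ≠ 0) (hdeg : p.natDegree = q.natDegree)
    (heq : ∀ t, q.eval (φ t) = p.eval t) :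
    Tendsto (fun t => t / φ t) (cobounded ℝ)
      (𝓝 ((q.leadingCoeff / p.leadingCoeff) ^ (q.natDegree : ℝ)⁻¹)) := by
  have hp : p.natDegree ≠ 0 := hdeg ▸ hq
  have hφlim := tendsto_cobounded_of_eval_comp_eq hp heq
  have hlead : p.leadingCoeff ≠ 0 :=
    leadingCoeff_ne_zero.mpr (ne_zero_of_natDegree_gt (Nat.pos_of_ne_zero hp))
  have hlimp := tendsto_eval_div_pow_cobounded hdeg.le
  rw [← hdeg] at hlimp
  refine tendsto_rpow_inv_of_tendsto_pow hq (eventually_div_nonneg_of_monotone hφ hφlim) ?_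
  refine (((tendsto_eval_div_pow_cobounded le_rfl).comp hφlim).div hlimp hlead).congr' ?_
  have hpne : ∀ᶠ t in cobounded ℝ, p.eval t / t ^ p.natDegree ≠ 0 := hlimp.eventually_ne hlead
  filter_upwards [hpne] with t hpt
  rw [div_ne_zero_iff] at hpt
  simp only [Function.comp_apply, Pi.div_apply, heq, hdeg] at hpt ⊢
  rw [div_div_div_cancel_left' _ _ hpt.1, div_pow]

end Growth

section EulerDefect

/-- The defect `n P - X P'` of a polynomial `P` in Euler's identity `X P' = n P` for homogeneous
polynomials of degree `n`. Passing to it cancels the term of degree `n`. -/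
noncomputable def eulerDefect {R : Type*} [Ring R] (n : ℕ) (P : R[X]) : R[X] :=
  n • P - X * derivative P

theorem coeff_eulerDefect {R : Type*} [Ring R] (n : ℕ) (P : R[X]) (k : ℕ) :
    (eulerDefect n P).coeff k = (n - k) * P.coeff k := by
  cases k with
  | zero => simp [eulerDefect]
  | succ k =>
    rw [eulerDefect, coeff_sub, coeff_smul, coeff_X_mul, coeff_derivative, nsmul_eq_mul, sub_mul,
      ← Nat.cast_succ, Nat.cast_comm (k + 1)]

theorem natDegree_eulerDefect_le {R : Type*} [Ring R] {n : ℕ} {P : R[X]}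
    (hP : P.natDegree ≤ n + 1) : (eulerDefect (n + 1) P).natDegree ≤ n := by
  rw [natDegree_le_iff_coeff_eq_zero]
  intro k hk
  rw [coeff_eulerDefect]
  obtain rfl | hlt := (Nat.succ_le_of_lt hk).eq_or_lt
  · simp
  · rw [coeff_eq_zero_of_natDegree_lt (hP.trans_lt hlt), mul_zero]

variable {𝕜 : Type*} [NontriviallyNormedField 𝕜] {φ : 𝕜 → 𝕜} {p q : 𝕜[X]}

theorem eval_derivative_mul_sub_mul_deriv {t : 𝕜} (hφ : DifferentiableAt 𝕜 φ t)
    (heq : ∀ t, q.eval (φ t) = p.eval t) (n : ℕ) :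
    q.derivative.eval (φ t) * (φ t - t * deriv φ t) =
      (eulerDefect n p).eval t - (eulerDefect n q).eval (φ t) := by
  have hchain : q.derivative.eval (φ t) * deriv φ t = p.derivative.eval t :=
    ((q.hasDerivAt (φ t)).comp t hφ.hasDerivAt).unique <|
      (p.hasDerivAt t).congr_of_eventuallyEq (.of_forall heq)
  simp only [eulerDefect, eval_sub, eval_smul, eval_mul, eval_X, heq, ← hchain]
  ring

theorem tendsto_sub_mul_deriv [CharZero 𝕜] {n : ℕ} {c : 𝕜} (hφ : Differentiable 𝕜 φ)
    (hp : p.natDegree ≤ n + 1) (hq : q.natDegree = n + 1)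
    (heq : ∀ t, q.eval (φ t) = p.eval t) (hφlim : Tendsto φ (cobounded 𝕜) (cobounded 𝕜))
    (hc : Tendsto (fun t => t / φ t) (cobounded 𝕜) (𝓝 c)) :
    Tendsto (fun t => φ t - t * deriv φ t) (cobounded 𝕜)
      (𝓝 ((p.coeff n * c ^ n - q.coeff n) / ((n + 1) * q.leadingCoeff))) := by
  have hlimp := tendsto_eval_div_pow_cobounded (natDegree_eulerDefect_le hp)
  have hlimq := (tendsto_eval_div_pow_cobounded (natDegree_eulerDefect_le hq.le)).comp hφlim
  have hlimq' : Tendsto (fun t => q.derivative.eval (φ t) / φ t ^ n) (cobounded 𝕜)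
      (𝓝 ((n + 1) * q.leadingCoeff)) := by
    have hdeg : q.derivative.natDegree ≤ n := by simp [natDegree_derivative, hq]
    convert! (tendsto_eval_div_pow_cobounded hdeg).comp hφlim using 2
    rw [coeff_derivative, leadingCoeff, hq, mul_comm]
  have hlead : (n + 1) * q.leadingCoeff ≠ 0 :=
    mul_ne_zero n.cast_add_one_ne_zero <|
      leadingCoeff_ne_zero.mpr (ne_zero_of_natDegree_gt (n.succ_pos.trans_eq hq.symm))
  simp only [coeff_eulerDefect, Nat.cast_add_one, add_sub_cancel_left, one_mul] at hlimp hlimq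
  refine (((hlimp.mul (hc.pow n)).sub hlimq).div hlimq' hlead).congr' ?_
  filter_upwards [eventually_ne_cobounded 0, hφlim.eventually (eventually_ne_cobounded 0),
    hlimq'.eventually_ne hlead] with t ht hφt hqt
  have hqt' : q.derivative.eval (φ t) ≠ 0 := (div_ne_zero_iff.mp hqt).1
  rw [eq_div_of_mul_eq hqt' <|
    (mul_comm _ _).trans (eval_derivative_mul_sub_mul_deriv (hφ t) heq (n + 1))]
  simp only [Pi.div_apply, Function.comp_apply, div_pow]
  field_simp

end EulerDefect

section LocalToGlobal

theorem isBigO_top_of_nhds_of_cocompact {X E F : Type*} [TopologicalSpace X] [Norm E]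
    [SeminormedAddCommGroup F] {f : X → E} {g : X → F} (hloc : ∀ a, f =O[𝓝 a] g)
    (hinf : f =O[cocompact X] g) : f =O[⊤] g := by
  obtain ⟨C, hC⟩ := hinf.bound
  obtain ⟨s, hs, hsC⟩ := mem_cocompact.mp hC
  have hcompl : f =O[𝓟 sᶜ] g := .of_bound C (mem_principal.mpr hsC)
  have hcompact : f =O[𝓟 s] g := by
    refine hs.induction_on (p := fun s => f =O[𝓟 s] g) ?_ ?_ ?_ ?_
    · simpa only [principal_empty] using isBigO_bot f g
    · exact fun u v huv hv => hv.mono (principal_mono.mpr huv)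
    · intro u v hu hv
      simpa only [sup_principal] using hu.sup hv
    · intro a _
      obtain ⟨D, hD⟩ := (hloc a).bound
      exact ⟨_, mem_nhdsWithin_of_mem_nhds hD, .of_bound D (mem_principal_self _)⟩
  simpa only [sup_principal, Set.union_compl_self, principal_univ] using hcompact.sup hcompl

theorem isBigO_one_deriv_of_locallyLipschitz {𝕜 F : Type*} [NontriviallyNormedField 𝕜]
    [NormedAddCommGroup F] [NormedSpace 𝕜 F] {φ : 𝕜 → F} (hφ : LocallyLipschitz φ) (a : 𝕜) :
    deriv φ =O[𝓝 a] fun _ => (1 : ℝ) := by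
  obtain ⟨K, s, hs, hK⟩ := hφ a
  refine .of_bound K ?_
  filter_upwards [eventually_mem_nhds_iff.mpr hs] with t ht
  simpa using norm_deriv_le_of_lipschitzOn ht hK

theorem exists_abs_sub_mul_deriv_le {φ : ℝ → ℝ} {L : ℝ} (hφ : LocallyLipschitz φ)
    (hL : Tendsto (fun t => φ t - t * deriv φ t) (cobounded ℝ) (𝓝 L)) :
    ∃ M, ∀ t, |φ t - t * deriv φ t| ≤ M := by
  have hloc (a : ℝ) : (fun t => φ t - t * deriv φ t) =O[𝓝 a] fun _ => (1 : ℝ) := by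
    have hmul : (fun t => t * deriv φ t) =O[𝓝 a] fun _ => (1 : ℝ) * 1 :=
      (continuousAt_id.tendsto.isBigO_one ℝ).mul (isBigO_one_deriv_of_locallyLipschitz hφ a)
    rw [one_mul] at hmul
    exact ((hφ.continuous.tendsto a).isBigO_one ℝ).sub hmul
  have hinf := hL.isBigO_one ℝ
  rw [Metric.cobounded_eq_cocompact] at hinf
  simpa using isBigO_top.mp (isBigO_top_of_nhds_of_cocompact hloc hinf)

end LocalToGlobal

theorem differentiable_and_tendsto_sub_mul_deriv_of_monotone {φ : ℝ → ℝ} {p q : ℝ[X]}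
    (hφmono : Monotone φ) (hφlip : LocallyLipschitz φ) (hq : q.natDegree ≠ 0)
    (hdeg : p.natDegree = q.natDegree) (heq : ∀ t, q.eval (φ t) = p.eval t) :
    Differentiable ℝ φ ∧ ∃ L, Tendsto (fun t => φ t - t * deriv φ t) (cobounded ℝ) (𝓝 L) := by
  obtain ⟨n, hn⟩ := Nat.exists_eq_succ_of_ne_zero hq
  have hdiff := differentiable_of_eval_comp_eq hφmono hφlip hq heq
  exact ⟨hdiff, _, tendsto_sub_mul_deriv hdiff (hdeg.trans hn).le hn heq
    (tendsto_cobounded_of_eval_comp_eq (hdeg ▸ hq) heq)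
    (tendsto_div_of_eval_comp_eq hφmono hq hdeg heq)⟩

theorem differentiable_and_tendsto_sub_mul_deriv_of_injective {φ : ℝ → ℝ} {p q : ℝ[X]}
    (hφinj : Function.Injective φ) (hφlip : LocallyLipschitz φ) (hq : q.natDegree ≠ 0)
    (hdeg : p.natDegree = q.natDegree) (heq : ∀ t, q.eval (φ t) = p.eval t) :
    Differentiable ℝ φ ∧ ∃ L, Tendsto (fun t => φ t - t * deriv φ t) (cobounded ℝ) (𝓝 L) := by
  rcases hφlip.continuous.strictMono_of_inj hφinj with hmono | hanti
  · exact differentiable_and_tendsto_sub_mul_deriv_of_monotone hmono.monotone hφlip hq hdeg heq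
  · have hdegneg : (q.comp (-X)).natDegree = q.natDegree := by simp [natDegree_comp]
    obtain ⟨hdiff, L, hL⟩ := differentiable_and_tendsto_sub_mul_deriv_of_monotone (φ := -φ) (p := p)
      (q := q.comp (-X)) hanti.antitone.neg hφlip.neg (hdegneg ▸ hq) (hdegneg ▸ hdeg)
      (by simpa using heq)
    refine ⟨by simpa using hdiff.neg, -L, hL.neg.congr fun t => ?_⟩
    rw [deriv.neg]
    simp only [Pi.neg_apply]
    ring

theorem stmt_12_general {φ : ℝ → ℝ} {p q : ℝ[X]} (hφinj : Function.Injective φ)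
    (hφlip : LocallyLipschitz φ) (hq : q.natDegree ≠ 0) (hdeg : p.natDegree = q.natDegree)
    (heq : ∀ t, q.eval (φ t) = p.eval t) :
    Differentiable ℝ φ ∧ (∃ M : ℝ, ∀ t : ℝ, |φ t - t * deriv φ t| ≤ M) ∧
      ∃ L : ℝ, Tendsto (fun t => φ t - t * deriv φ t) atTop (𝓝 L) ∧
        Tendsto (fun t => φ t - t * deriv φ t) atBot (𝓝 L) := by
  obtain ⟨hdiff, L, hL⟩ :=
    differentiable_and_tendsto_sub_mul_deriv_of_injective hφinj hφlip hq hdeg heq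
  refine ⟨hdiff, exists_abs_sub_mul_deriv_le hφlip hL, L, ?_⟩
  rwa [IsOrderBornology.cobounded_eq, tendsto_sup, and_comm] at hL

/-- If `φ` is a bi-Lipschitz homeomorphism of `ℝ` with `g ∘ φ = f` for nonconstant
polynomial functions `f, g`, then `φ` is differentiable, `φ(t) − t·φ′(t)` is bounded,
and `φ(t) − t·φ′(t)` has a finite limit as `|t| → +∞`. -/
theorem stmt_12 (φ : ℝ → ℝ) (hφbij : Function.Bijective φ)
    (hφlip : ∃ K : NNReal, LipschitzWith K φ)
    (hφinv : ∃ K : NNReal, LipschitzWith K (Function.invFun φ))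
    (p q : Polynomial ℝ) (hp : 1 ≤ p.natDegree) (hq : 1 ≤ q.natDegree)
    (heq : ∀ t : ℝ, q.eval (φ t) = p.eval t) :
    Differentiable ℝ φ ∧
    (∃ M : ℝ, ∀ t : ℝ, |φ t - t * deriv φ t| ≤ M) ∧
    ∃ L : ℝ, Tendsto (fun t => φ t - t * deriv φ t) atTop (𝓝 L) ∧
      Tendsto (fun t => φ t - t * deriv φ t) atBot (𝓝 L) := by
  obtain ⟨K, hK⟩ := hφlip
  obtain ⟨K', hK'⟩ := hφinv
  have hdeg : p.natDegree = q.natDegree :=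
    natDegree_eq_of_eval_comp_eq (isBigO_id_cobounded_of_lipschitzWith hK)
      (isBigO_id_cobounded_of_lipschitzWith hK') (Function.rightInverse_invFun hφbij.surjective) heq
  exact stmt_12_general hφbij.injective hK.locallyLipschitz (Nat.one_le_iff_ne_zero.mp hq) hdeg heq
end

section
/- Let φ : ℝ → ℝ be a bi-Lipschitz homeomorphism such that g ∘ φ = f for some nonconstant real polynomial functions f, g : ℝ → ℝ. Then there exists a nonzero real number l with φ(t)/t → l as |t| → +∞, and the function ψ : ℝ → ℝ defined by ψ(t) := t·φ(1/t) for t ≠ 0 and ψ(0) := l is real-analytic on all of ℝ (in particular, analytic at 0). -/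
open Filter Topology

/-!
Near a point `a`, the equation `g ∘ φ = f` says that `g` and `f`, up to constants, vanish at `φ a`
and `a` to the same order `n`, because `φ` is bi-Lipschitz. Extracting `n`-th roots turns it into
`r ∘ φ = ± s` with `r` and `s` analytic and `r` locally invertible, the sign being constant because
`φ` is monotone; so `φ = r⁻¹ ∘ (± s)` is analytic. After normalizing `φ 0 = f 0 = g 0 = 0`, the
conjugation by `x ↦ x⁻¹` turns `φ` into another bi-Lipschitz map and `f`, `g` into functions
analytic at `0`. So the same argument applies at infinity: `χ u = (φ u⁻¹)⁻¹` is analytic at `0`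
with `χ' 0 ≠ 0`, and `u * φ u⁻¹ = (χ u / u)⁻¹`.
-/

section LocalTheory

open Asymptotics

theorem eq_of_pow_two_mul_eq_of_mul_nonneg {R : Type*} [Ring R] [LinearOrder R]
    [IsStrictOrderedRing R] {x y : R} {n : ℕ} (hn : n ≠ 0) (h : x ^ (2 * n) = y ^ (2 * n))
    (hxy : 0 ≤ x * y) : x = y := by
  rcases (pow_eq_pow_iff_of_ne_zero (by lia)).1 h with h | ⟨rfl, -⟩
  · exact h
  · have hy : y = 0 := by simpa using hxy.antisymm' (by simpa using mul_self_nonneg y)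
    simp [hy]

variable {𝕜 : Type*} [NontriviallyNormedField 𝕜]

theorem isTheta_pow_sub_pow_sub_iff {a : 𝕜} {m n : ℕ} :
    (fun x => (x - a) ^ m) =Θ[𝓝 a] (fun x => (x - a) ^ n) ↔ m = n := by
  refine ⟨fun h => ?_, fun h => h ▸ isTheta_rfl⟩
  have not_lt_of_isBigO {i j : ℕ}
      (hij : (fun x => (x - a) ^ i) =O[𝓝 a] (fun x => (x - a) ^ j)) : ¬ i < j := by
    intro hlt
    have hsub : Tendsto (fun x => x - a) (𝓝 a) (𝓝 0) := tendsto_sub_nhds_zero_iff.2 tendsto_id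
    have hlittle := hij.trans_isLittleO ((isLittleO_pow_pow (𝕜 := 𝕜) hlt).comp_tendsto hsub)
    refine isLittleO_irrefl ?_ hlittle
    have hne : ∀ᶠ x in 𝓝[≠] a, (x - a) ^ i ≠ 0 := eventually_mem_nhdsWithin.mono fun x hx =>
      pow_ne_zero i (sub_ne_zero.2 hx)
    exact hne.frequently.filter_mono nhdsWithin_le_nhds
  exact le_antisymm (not_lt.1 (not_lt_of_isBigO h.2)) (not_lt.1 (not_lt_of_isBigO h.1))

variable {E : Type*} [NormedAddCommGroup E] [NormedSpace 𝕜 E]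

theorem isTheta_of_analyticOrderAt_eq {f : 𝕜 → E} {a : 𝕜} {n : ℕ} (hf : AnalyticAt 𝕜 f a)
    (hn : analyticOrderAt f a = n) : f =Θ[𝓝 a] (fun x => (x - a) ^ n) := by
  obtain ⟨F, hF, hFa, hfF⟩ := hf.analyticOrderAt_eq_natCast.1 hn
  have hF_one : F =Θ[𝓝 a] (fun _ => (1 : 𝕜)) :=
    ⟨hF.continuousAt.isBigO_one 𝕜, (isBigO_const_left_iff_pos_le_norm one_ne_zero).2
      ⟨‖F a‖ / 2, by positivity, hF.continuousAt.norm.eventually_const_le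
        (half_lt_self (norm_pos_iff.2 hFa))⟩⟩
  refine EventuallyEq.trans_isTheta hfF ?_
  simpa using (isTheta_refl (fun x => (x - a) ^ n) (𝓝 a)).smul hF_one

theorem analyticOrderAt_eq_iff_isTheta {f : 𝕜 → E} {a : 𝕜} {n : ℕ} (hf : AnalyticAt 𝕜 f a) :
    analyticOrderAt f a = n ↔ f =Θ[𝓝 a] (fun x => (x - a) ^ n) := by
  refine ⟨isTheta_of_analyticOrderAt_eq hf, fun h => ?_⟩
  obtain htop | ⟨m, hm⟩ : analyticOrderAt f a = ⊤ ∨ ∃ m : ℕ, analyticOrderAt f a = m := by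
    cases analyticOrderAt f a <;> simp
  · have hpow : (fun x => (x - a) ^ n) =ᶠ[𝓝 a] 0 :=
      isTheta_zero_left.1 (EventuallyEq.trans_isTheta
        (EventuallyEq.symm (analyticOrderAt_eq_top.1 htop)) h)
    have hpow_order := analyticOrderAt_eq_top.2 hpow
    exact absurd hpow_order (by simp [← Pi.pow_def])
  · rw [hm, isTheta_pow_sub_pow_sub_iff.1 ((isTheta_of_analyticOrderAt_eq hf hm).symm.trans h)]

theorem analyticAt_of_analyticAt_comp_of_deriv_ne_zero [CompleteSpace 𝕜] [CharZero 𝕜]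
    {g : 𝕜 → 𝕜} {χ : E → 𝕜} {a : E} (hg : AnalyticAt 𝕜 g (χ a)) (hg' : deriv g (χ a) ≠ 0)
    (hχ : ContinuousAt χ a) (hcomp : AnalyticAt 𝕜 (g ∘ χ) a) : AnalyticAt 𝕜 χ a :=
  (AnalyticAt.comp (f := g ∘ χ) (hg.analyticAt_localInverse hg') hcomp).congr
    (hχ.eventually (hg.hasStrictDerivAt.eventually_left_inverse hg'))

theorem analyticAt_of_pow_two_mul_eventuallyEq [NormedSpace ℝ E] {u v : E → ℝ} {a : E} {n : ℕ}
    (hn : n ≠ 0) (hv : AnalyticAt ℝ v a) (huv : ∀ᶠ x in 𝓝 a, u x ^ (2 * n) = v x ^ (2 * n))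
    (hsign : (∀ᶠ x in 𝓝 a, 0 ≤ u x * v x) ∨ (∀ᶠ x in 𝓝 a, u x * v x ≤ 0)) :
    AnalyticAt ℝ u a := by
  rcases hsign with hsign | hsign
  · refine hv.congr ?_
    filter_upwards [huv, hsign] with x hpow hx
    exact (eq_of_pow_two_mul_eq_of_mul_nonneg hn hpow hx).symm
  · refine hv.neg.congr ?_
    filter_upwards [huv, hsign] with x hpow hx
    refine (eq_of_pow_two_mul_eq_of_mul_nonneg hn ?_ ?_).symm
    · rwa [Pi.neg_apply, (even_two_mul n).neg_pow]
    · simpa using hx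

theorem exists_analyticAt_pos_pow_eventuallyEq [NormedSpace ℝ E] {f : E → ℝ} {a : E}
    (hf : AnalyticAt ℝ f a) (ha : 0 < f a) {n : ℕ} (hn : n ≠ 0) :
    ∃ r : E → ℝ, AnalyticAt ℝ r a ∧ (∀ x, 0 < r x) ∧ ∀ᶠ x in 𝓝 a, r x ^ n = f x := by
  refine ⟨fun x => Real.exp (Real.log (f x) / n), ((analyticAt_log ha).div_const.rexp').comp hf,
    fun x => Real.exp_pos _, ?_⟩
  filter_upwards [hf.continuousAt.eventually_const_lt ha] with x hx
  rw [← Real.exp_nat_mul, mul_div_cancel₀ _ (by positivity), Real.exp_log hx]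

/- Squaring makes the cofactor of `(x - a) ^ n` positive, so that its root is analytic whatever
the sign of `f`. -/
theorem exists_sq_eventuallyEq_mul_pow {f : ℝ → ℝ} {a : ℝ} {n : ℕ} (hf : AnalyticAt ℝ f a)
    (hn : n ≠ 0) (hfn : analyticOrderAt f a = n) :
    ∃ r : ℝ → ℝ, AnalyticAt ℝ r a ∧ (∀ x, 0 < r x) ∧
      ∀ᶠ x in 𝓝 a, f x ^ 2 = ((x - a) * r x) ^ (2 * n) := by
  obtain ⟨F, hF, hFa, hfF⟩ := hf.analyticOrderAt_eq_natCast.1 hfn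
  obtain ⟨r, hr, hr_pos, hrF⟩ := exists_analyticAt_pos_pow_eventuallyEq (hF.fun_pow 2)
    (by positivity) (mul_ne_zero two_ne_zero hn)
  refine ⟨r, hr, hr_pos, ?_⟩
  filter_upwards [hfF, hrF] with x hfx hrx
  rw [hfx, smul_eq_mul, mul_pow, mul_pow, hrx, ← pow_mul, mul_comm n]

theorem analyticOrderAt_sub_eq_of_comp_eventuallyEq {f g χ : 𝕜 → 𝕜} {a : 𝕜} {n : ℕ}
    (hf : AnalyticAt 𝕜 f a) (hg : AnalyticAt 𝕜 g (χ a)) (hχ : ContinuousAt χ a)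
    (hχΘ : (fun x => χ x - χ a) =Θ[𝓝 a] (fun x => x - a)) (hfg : g ∘ χ =ᶠ[𝓝 a] f)
    (hn : analyticOrderAt (g · - g (χ a)) (χ a) = n) :
    analyticOrderAt (f · - f a) a = n := by
  rw [analyticOrderAt_eq_iff_isTheta (by fun_prop)] at hn ⊢
  have hfg_sub : (fun x => f x - f a) =ᶠ[𝓝 a] (fun x => g (χ x) - g (χ a)) := by
    filter_upwards [hfg] with x hx
    rw [← hx, ← hfg.eq_of_nhds, Function.comp_apply, Function.comp_apply]
  have hgχ : (fun x => g (χ x) - g (χ a)) =Θ[𝓝 a] (fun x => (χ x - χ a) ^ n) :=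
    ⟨hn.1.comp_tendsto hχ, hn.2.comp_tendsto hχ⟩
  exact hfg_sub.trans_isTheta (hgχ.trans (hχΘ.pow n))

theorem analyticAt_of_comp_eventuallyEq {f g χ : ℝ → ℝ} {a : ℝ} (hf : AnalyticAt ℝ f a)
    (hg : AnalyticAt ℝ g (χ a)) (hg_const : ¬ EventuallyConst g (𝓝 (χ a)))
    (hχ : ContinuousAt χ a) (hχΘ : (fun x => χ x - χ a) =Θ[𝓝 a] (fun x => x - a))
    (hχ_sign : (∀ᶠ x in 𝓝 a, 0 ≤ (χ x - χ a) * (x - a)) ∨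
      (∀ᶠ x in 𝓝 a, (χ x - χ a) * (x - a) ≤ 0))
    (hfg : g ∘ χ =ᶠ[𝓝 a] f) : AnalyticAt ℝ χ a := by
  have hg_sub : AnalyticAt ℝ (g · - g (χ a)) (χ a) := by fun_prop
  obtain ⟨n, hgn⟩ := ENat.ne_top_iff_exists.1 (mt eventuallyConst_iff_analyticOrderAt_sub_eq_top.2
    hg_const)
  have hn : n ≠ 0 := by
    rintro rfl
    exact hg_sub.analyticOrderAt_ne_zero.2 (sub_self _) hgn.symm
  have hfn := analyticOrderAt_sub_eq_of_comp_eventuallyEq hf hg hχ hχΘ hfg hgn.symm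
  obtain ⟨r, hr, hr_pos, hgr⟩ := exists_sq_eventuallyEq_mul_pow hg_sub hn hgn.symm
  obtain ⟨s, hs, hs_pos, hfs⟩ := exists_sq_eventuallyEq_mul_pow (by fun_prop) hn hfn
  have hpow : ∀ᶠ x in 𝓝 a, ((χ x - χ a) * r (χ x)) ^ (2 * n) = ((x - a) * s x) ^ (2 * n) := by
    filter_upwards [hχ.eventually hgr, hfs, hfg] with x hgx hfx hfgx
    rw [← hgx, ← hfx, ← hfgx, ← hfg.eq_of_nhds, Function.comp_apply, Function.comp_apply]
  have hs_analytic : AnalyticAt ℝ (fun x => (x - a) * s x) a := by fun_prop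
  have hr_analytic : AnalyticAt ℝ (fun y => (y - χ a) * r y) (χ a) := by fun_prop
  have hr_deriv : deriv (fun y => (y - χ a) * r y) (χ a) ≠ 0 := by
    have hderiv : HasDerivAt (fun y => (y - χ a) * r y) (r (χ a)) (χ a) := by
      simpa using ((hasDerivAt_id' (χ a)).sub_const (χ a)).fun_mul hr.differentiableAt.hasDerivAt
    exact hderiv.deriv ▸ (hr_pos (χ a)).ne'
  refine analyticAt_of_analyticAt_comp_of_deriv_ne_zero hr_analytic hr_deriv hχ ?_
  refine analyticAt_of_pow_two_mul_eventuallyEq hn hs_analytic hpow ?_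
  have hrs_pos (x : ℝ) : 0 < r (χ x) * s x := mul_pos (hr_pos _) (hs_pos _)
  simp only [Function.comp_apply, mul_mul_mul_comm _ (r _)]
  exact hχ_sign.imp (.mono · fun x hx => mul_nonneg hx (hrs_pos x).le)
    (.mono · fun x hx => mul_nonpos_of_nonpos_of_nonneg hx (hrs_pos x).le)

theorem isTheta_sub_of_lipschitzWith_of_antilipschitzWith {F G : Type*}
    [SeminormedAddCommGroup F] [SeminormedAddCommGroup G] {χ : F → G} {K K' : NNReal}
    (hK : LipschitzWith K χ) (hK' : AntilipschitzWith K' χ) (a : F) (l : Filter F) :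
    (fun x => χ x - χ a) =Θ[l] (fun x => x - a) :=
  ⟨.of_bound K (.of_forall fun x => by simpa [dist_eq_norm] using hK.dist_le_mul x a),
    .of_bound K' (.of_forall fun x => by simpa [dist_eq_norm] using hK'.le_mul_dist x a)⟩

theorem analyticAt_of_comp_eventuallyEq_of_biLipschitz {f g χ : ℝ → ℝ} {a : ℝ} {K K' : NNReal}
    (hK : LipschitzWith K χ) (hK' : AntilipschitzWith K' χ) (hf : AnalyticAt ℝ f a)
    (hg : AnalyticAt ℝ g (χ a)) (hg_const : ¬ EventuallyConst g (𝓝 (χ a)))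
    (hfg : g ∘ χ =ᶠ[𝓝 a] f) : AnalyticAt ℝ χ a := by
  refine analyticAt_of_comp_eventuallyEq hf hg hg_const hK.continuous.continuousAt
    (isTheta_sub_of_lipschitzWith_of_antilipschitzWith hK hK' a _) ?_ hfg
  exact (hK.continuous.strictMono_of_inj hK'.injective).imp
    (fun hmono => .of_forall fun x =>
      monovary_iff_forall_mul_nonneg.1 (hmono.monotone.monovary monotone_id) a x)
    (fun hanti => .of_forall fun x =>
      antivary_iff_forall_mul_nonpos.1 (hanti.antitone.antivary monotone_id) a x)

end LocalTheory

section ConjInv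

/-- The map `f` read in the coordinate `x⁻¹` on both sides. With `0⁻¹ = 0`, the behaviour of
`conjInv f` at `0` is the behaviour of `f` at infinity as soon as `f 0 = 0`. -/
def conjInv {α β : Type*} [Inv α] [Inv β] (f : α → β) (u : α) : β := (f u⁻¹)⁻¹

theorem conjInv_comp_conjInv {α β γ : Type*} [Inv α] [InvolutiveInv β] [Inv γ] (g : β → γ)
    (f : α → β) : conjInv g ∘ conjInv f = conjInv (g ∘ f) := by
  funext u
  simp [conjInv]

theorem conjInv_zero {α β : Type*} [GroupWithZero α] [GroupWithZero β] {f : α → β} (hf : f 0 = 0) :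
    conjInv f 0 = 0 := by
  simp [conjInv, hf]

theorem one_le_mul_of_lipschitzWith_of_antilipschitzWith {α β : Type*} [MetricSpace α]
    [Nontrivial α] [PseudoMetricSpace β] {f : α → β} {K K' : NNReal} (hK : LipschitzWith K f)
    (hK' : AntilipschitzWith K' f) : 1 ≤ K * K' := by
  obtain ⟨x, y, hxy⟩ := exists_pair_ne α
  have hdist : dist x y ≤ K * K' * dist x y := by
    calc dist x y ≤ K' * dist (f x) (f y) := hK'.le_mul_dist x y
      _ ≤ K' * (K * dist x y) := by gcongr; exact hK.dist_le_mul x y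
      _ = K * K' * dist x y := by ring
  exact_mod_cast (le_mul_iff_one_le_left (dist_pos.2 hxy)).1 hdist

theorem inv_le_mul_inv_of_le_mul {α : Type*} [Field α] [LinearOrder α] [IsStrictOrderedRing α]
    {a b k : α} (ha : 0 < a) (hb : 0 < b) (h : a ≤ k * b) : b⁻¹ ≤ k * a⁻¹ := by
  field_simp
  linarith

variable {𝕜 𝕜' : Type*} [NormedDivisionRing 𝕜] [NormedDivisionRing 𝕜'] {f : 𝕜 → 𝕜'}
  {K K' : NNReal}

theorem norm_conjInv_le_mul_norm (hK' : AntilipschitzWith K' f) (hf : f 0 = 0) (u : 𝕜) :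
    ‖conjInv f u‖ ≤ K' * ‖u‖ := by
  rcases eq_or_ne u 0 with rfl | hu
  · simp [conjInv_zero hf]
  · have hfu : f u⁻¹ ≠ 0 := hf ▸ hK'.injective.ne (inv_ne_zero hu)
    simpa [conjInv] using inv_le_mul_inv_of_le_mul (norm_pos_iff.2 (inv_ne_zero hu))
      (norm_pos_iff.2 hfu) (hK'.le_mul_norm hf u⁻¹)

theorem norm_le_mul_norm_conjInv (hK : LipschitzWith K f) (hf_inj : f.Injective) (hf : f 0 = 0)
    (u : 𝕜) : ‖u‖ ≤ K * ‖conjInv f u‖ := by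
  rcases eq_or_ne u 0 with rfl | hu
  · simp [conjInv_zero hf]
  · have hfu : f u⁻¹ ≠ 0 := hf ▸ hf_inj.ne (inv_ne_zero hu)
    simpa [conjInv] using inv_le_mul_inv_of_le_mul (norm_pos_iff.2 hfu)
      (norm_pos_iff.2 (inv_ne_zero hu)) (hK.norm_le_mul hf u⁻¹)

theorem dist_conjInv (hf_inj : f.Injective) (hf : f 0 = 0) {u v : 𝕜} (hu : u ≠ 0) (hv : v ≠ 0) :
    dist (conjInv f u) (conjInv f v) =
      dist (f u⁻¹) (f v⁻¹) * (‖conjInv f u‖ * ‖conjInv f v‖) := by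
  have hfu : f u⁻¹ ≠ 0 := hf ▸ hf_inj.ne (inv_ne_zero hu)
  have hfv : f v⁻¹ ≠ 0 := hf ▸ hf_inj.ne (inv_ne_zero hv)
  simp only [conjInv, dist_inv_inv₀ hfu hfv, norm_inv, div_eq_mul_inv, mul_inv]

theorem lipschitzWith_conjInv (hK : LipschitzWith K f) (hK' : AntilipschitzWith K' f)
    (hf : f 0 = 0) : LipschitzWith (K * K' * K') (conjInv f) := by
  have hKK' : (1 : ℝ) ≤ K * K' := by
    exact_mod_cast one_le_mul_of_lipschitzWith_of_antilipschitzWith hK hK'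
  have hnorm (u : 𝕜) : ‖conjInv f u‖ ≤ K * K' * K' * ‖u‖ :=
    (norm_conjInv_le_mul_norm hK' hf u).trans (by
      gcongr
      exact le_mul_of_one_le_left K'.coe_nonneg hKK')
  refine .of_dist_le_mul fun u v => ?_
  rcases eq_or_ne u 0 with rfl | hu
  · simpa [conjInv_zero hf] using hnorm v
  rcases eq_or_ne v 0 with rfl | hv
  · simpa [conjInv_zero hf] using hnorm u
  calc dist (conjInv f u) (conjInv f v)
      = dist (f u⁻¹) (f v⁻¹) * (‖conjInv f u‖ * ‖conjInv f v‖) :=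
        dist_conjInv hK'.injective hf hu hv
    _ ≤ K * dist u⁻¹ v⁻¹ * (K' * ‖u‖ * (K' * ‖v‖)) := by
        gcongr
        · exact hK.dist_le_mul _ _
        · exact norm_conjInv_le_mul_norm hK' hf u
        · exact norm_conjInv_le_mul_norm hK' hf v
    _ = ↑(K * K' * K') * dist u v := by
        rw [dist_inv_inv₀ hu hv]
        push_cast
        field_simp [norm_ne_zero_iff.2 hu, norm_ne_zero_iff.2 hv]

theorem antilipschitzWith_conjInv (hK : LipschitzWith K f) (hK' : AntilipschitzWith K' f)
    (hf : f 0 = 0) : AntilipschitzWith (K * K' * K) (conjInv f) := by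
  have hKK' : (1 : ℝ) ≤ K * K' := by
    exact_mod_cast one_le_mul_of_lipschitzWith_of_antilipschitzWith hK hK'
  have hnorm (u : 𝕜) : ‖u‖ ≤ K * K' * K * ‖conjInv f u‖ :=
    (norm_le_mul_norm_conjInv hK hK'.injective hf u).trans (by
      gcongr
      exact le_mul_of_one_le_left K.coe_nonneg hKK')
  refine .of_le_mul_dist fun u v => ?_
  rcases eq_or_ne u 0 with rfl | hu
  · simpa [conjInv_zero hf] using hnorm v
  rcases eq_or_ne v 0 with rfl | hv
  · simpa [conjInv_zero hf] using hnorm u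
  calc dist u v = dist u⁻¹ v⁻¹ * (‖u‖ * ‖v‖) := by
        rw [dist_inv_inv₀ hu hv]
        field_simp [norm_ne_zero_iff.2 hu, norm_ne_zero_iff.2 hv]
    _ ≤ K' * dist (f u⁻¹) (f v⁻¹) * (K * ‖conjInv f u‖ * (K * ‖conjInv f v‖)) := by
        gcongr
        · exact hK'.le_mul_dist _ _
        · exact norm_le_mul_norm_conjInv hK hK'.injective hf u
        · exact norm_le_mul_norm_conjInv hK hK'.injective hf v
    _ = ↑(K * K' * K) * dist (conjInv f u) (conjInv f v) := by
        rw [dist_conjInv hK'.injective hf hu hv]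
        push_cast
        ring

end ConjInv

section BlowUp

open Asymptotics Function

variable {𝕜 : Type*} [NontriviallyNormedField 𝕜]

theorem analyticAt_dslope {E : Type*} [NormedAddCommGroup E] [NormedSpace 𝕜 E] {f : 𝕜 → E} {a : 𝕜}
    (hf : AnalyticAt 𝕜 f a) : AnalyticAt 𝕜 (dslope f a) a :=
  let ⟨_, hp⟩ := hf
  ⟨_, hp.has_fpower_series_dslope_fslope⟩

theorem deriv_ne_zero_of_isBigO_sub {E : Type*} [NormedAddCommGroup E] [NormedSpace 𝕜 E]
    {f : 𝕜 → E} {a : 𝕜} (hf : DifferentiableAt 𝕜 f a)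
    (h : (fun x => x - a) =O[𝓝 a] (fun x => f x - f a)) : deriv f a ≠ 0 := by
  intro hderiv
  have hlittle : (fun x => f x - f a) =o[𝓝 a] (fun x => x - a) := by
    simpa [hderiv] using hasDerivAt_iff_isLittleO.1 hf.hasDerivAt
  have hne : ∀ᶠ x in 𝓝[≠] a, x - a ≠ 0 :=
    eventually_mem_nhdsWithin.mono fun x hx => sub_ne_zero.2 hx
  exact isLittleO_irrefl (hne.frequently.filter_mono nhdsWithin_le_nhds) (h.trans_isLittleO hlittle)

variable [DecidableEq 𝕜]

theorem analyticAt_update_mul_inv_of_conjInv {f : 𝕜 → 𝕜} (hf : f 0 = 0)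
    (hχ : AnalyticAt 𝕜 (conjInv f) 0) (hχ' : deriv (conjInv f) 0 ≠ 0) :
    AnalyticAt 𝕜 (update (fun u => u * f u⁻¹) 0 (deriv (conjInv f) 0)⁻¹) 0 := by
  have heq : update (fun u => u * f u⁻¹) 0 (deriv (conjInv f) 0)⁻¹ =
      fun u => (dslope (conjInv f) 0 u)⁻¹ := by
    funext u
    rcases eq_or_ne u 0 with rfl | hu
    · simp
    · rw [update_of_ne hu, dslope_of_ne _ hu, slope_def_field, conjInv_zero hf, sub_zero, sub_zero,
        conjInv, inv_div, div_inv_eq_mul]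
  rw [heq]
  exact (analyticAt_dslope hχ).inv (by rwa [dslope_same])

theorem analyticAt_update_mul_inv_of_sub_const {f : 𝕜 → 𝕜} {c l : 𝕜}
    (h : AnalyticAt 𝕜 (update (fun u => u * (f u⁻¹ - c)) 0 l) 0) :
    AnalyticAt 𝕜 (update (fun u => u * f u⁻¹) 0 l) 0 := by
  have heq : update (fun u => u * f u⁻¹) 0 l =
      fun u => update (fun u => u * (f u⁻¹ - c)) 0 l u + u * c := by
    funext u
    rcases eq_or_ne u 0 with rfl | hu
    · simp
    · simp only [update_of_ne hu]
      ring
  rw [heq]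
  fun_prop

theorem analyticAt_update_mul_inv_of_ne_zero {f : 𝕜 → 𝕜} {l t : 𝕜} (ht : t ≠ 0)
    (hf : AnalyticAt 𝕜 f t⁻¹) : AnalyticAt 𝕜 (update (fun u => u * f u⁻¹) 0 l) t :=
  (analyticAt_id.mul (hf.fun_comp (analyticAt_inv ht))).congr <|
    (eventually_ne_nhds ht).mono fun _ hu => (update_of_ne hu _ _).symm

theorem tendsto_div_cobounded_of_continuousAt_update {f : 𝕜 → 𝕜} {l : 𝕜}
    (h : ContinuousAt (update (fun u => u * f u⁻¹) 0 l) 0) :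
    Tendsto (fun t => f t / t) (Bornology.cobounded 𝕜) (𝓝 l) := by
  refine ((continuousAt_update_same.1 h).comp tendsto_inv₀_cobounded').congr fun t => ?_
  simp [div_eq_inv_mul]

end BlowUp

section Polynomial

open Polynomial

theorem not_eventuallyConst_eval {𝕜 : Type*} [NontriviallyNormedField 𝕜] {p : 𝕜[X]}
    (hp : p.natDegree ≠ 0) (a : 𝕜) : ¬ EventuallyConst (fun y => p.eval y) (𝓝 a) := by
  intro h
  obtain ⟨c, hc⟩ := eventuallyConst_iff_exists_eventuallyEq.1 h
  have hpc : p = C c := eq_of_infinite_eval_eq p (C c) (by simpa using infinite_of_mem_nhds a hc)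
  exact hp (by rw [hpc, natDegree_C])

theorem conjInv_eval_eq_pow_div_reverse {𝕜 : Type*} [Field 𝕜] {p : 𝕜[X]} (hp : p.natDegree ≠ 0)
    (hp_zero : p.eval 0 = 0) (u : 𝕜) :
    conjInv (fun x => p.eval x) u = u ^ p.natDegree / p.reverse.eval u := by
  rcases eq_or_ne u 0 with rfl | hu
  · simp [conjInv, hp, hp_zero]
  · let := invertibleOfNonzero (inv_ne_zero hu)
    have hrev : p.reverse.eval u * u⁻¹ ^ p.natDegree = p.eval u⁻¹ := by
      simpa [eval₂_id] using eval₂_reverse_mul_pow (RingHom.id 𝕜) u⁻¹ p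
    rw [conjInv, ← hrev]
    simp [div_eq_mul_inv, mul_comm]

theorem reverse_eval_zero_ne_zero {R : Type*} [Semiring R] {p : R[X]} (hp : p ≠ 0) :
    p.reverse.eval 0 ≠ 0 := by
  rwa [← coeff_zero_eq_eval_zero, coeff_zero_reverse, leadingCoeff_ne_zero]

variable {𝕜 : Type*} [NontriviallyNormedField 𝕜] {p : 𝕜[X]}

theorem analyticAt_conjInv_eval (hp : p.natDegree ≠ 0) (hp_zero : p.eval 0 = 0) :
    AnalyticAt 𝕜 (conjInv fun x => p.eval x) 0 := by
  rw [funext (conjInv_eval_eq_pow_div_reverse hp hp_zero)]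
  exact (analyticAt_id.fun_pow _).fun_div (AnalyticOnNhd.eval_polynomial _ 0 trivial)
    (reverse_eval_zero_ne_zero (ne_zero_of_natDegree_gt (Nat.pos_of_ne_zero hp)))

theorem not_eventuallyConst_conjInv_eval (hp : p.natDegree ≠ 0) (hp_zero : p.eval 0 = 0) :
    ¬ EventuallyConst (conjInv fun x => p.eval x) (𝓝 0) := by
  intro h
  have heq_zero : ∀ᶠ u in 𝓝[≠] (0 : 𝕜), conjInv (fun x => p.eval x) u = 0 := by
    obtain ⟨c, hc⟩ := eventuallyConst_iff_exists_eventuallyEq.1 h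
    have hc_zero : c = 0 := hc.eq_of_nhds.symm.trans (conjInv_zero hp_zero)
    exact nhdsWithin_le_nhds (hc_zero ▸ hc)
  have hrev : ∀ᶠ u in 𝓝[≠] (0 : 𝕜), p.reverse.eval u ≠ 0 :=
    nhdsWithin_le_nhds (p.reverse.continuous.continuousAt.eventually_ne
      (reverse_eval_zero_ne_zero (ne_zero_of_natDegree_gt (Nat.pos_of_ne_zero hp))))
  obtain ⟨u, hu_zero, hu_rev, hu⟩ :=
    (heq_zero.and (hrev.and eventually_mem_nhdsWithin)).exists
  rw [conjInv_eval_eq_pow_div_reverse hp hp_zero] at hu_zero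
  exact div_ne_zero (pow_ne_zero _ hu) hu_rev hu_zero

end Polynomial

section BiLipschitz

open Polynomial Function

variable {φ : ℝ → ℝ} {K K' : NNReal} {p q : ℝ[X]}

theorem analyticAt_of_eval_eq (hK : LipschitzWith K φ) (hK' : AntilipschitzWith K' φ)
    (hq : q.natDegree ≠ 0) (heq : ∀ t, q.eval (φ t) = p.eval t) (t : ℝ) : AnalyticAt ℝ φ t :=
  analyticAt_of_comp_eventuallyEq_of_biLipschitz hK hK' (AnalyticOnNhd.eval_polynomial p t trivial)
    (AnalyticOnNhd.eval_polynomial q _ trivial) (not_eventuallyConst_eval hq _) (.of_forall heq)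

theorem analyticAt_conjInv_of_eval_eq (hK : LipschitzWith K φ) (hK' : AntilipschitzWith K' φ)
    (hφ : φ 0 = 0) (hp : p.natDegree ≠ 0) (hq : q.natDegree ≠ 0) (hq_zero : q.eval 0 = 0)
    (heq : ∀ t, q.eval (φ t) = p.eval t) : AnalyticAt ℝ (conjInv φ) 0 := by
  have hp_zero : p.eval 0 = 0 := by rw [← heq, hφ, hq_zero]
  have hcomp : (conjInv fun y => q.eval y) ∘ conjInv φ = conjInv fun t => p.eval t := by
    rw [conjInv_comp_conjInv, ← funext heq, comp_def]
  refine analyticAt_of_comp_eventuallyEq_of_biLipschitz (lipschitzWith_conjInv hK hK' hφ)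
    (antilipschitzWith_conjInv hK hK' hφ) (analyticAt_conjInv_eval hp hp_zero) ?_ ?_
    hcomp.eventuallyEq
  all_goals rw [conjInv_zero hφ]
  · exact analyticAt_conjInv_eval hq hq_zero
  · exact not_eventuallyConst_conjInv_eval hq hq_zero

theorem exists_analyticAt_update_mul_inv_of_map_zero (hK : LipschitzWith K φ)
    (hK' : AntilipschitzWith K' φ) (hφ : φ 0 = 0) (hp : p.natDegree ≠ 0) (hq : q.natDegree ≠ 0)
    (hq_zero : q.eval 0 = 0) (heq : ∀ t, q.eval (φ t) = p.eval t) :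
    ∃ l : ℝ, l ≠ 0 ∧ AnalyticAt ℝ (update (fun u => u * φ u⁻¹) 0 l) 0 := by
  have hχ := analyticAt_conjInv_of_eval_eq hK hK' hφ hp hq hq_zero heq
  have hχ' : deriv (conjInv φ) 0 ≠ 0 := deriv_ne_zero_of_isBigO_sub hχ.differentiableAt
    (isTheta_sub_of_lipschitzWith_of_antilipschitzWith (lipschitzWith_conjInv hK hK' hφ)
      (antilipschitzWith_conjInv hK hK' hφ) 0 _).2
  exact ⟨_, inv_ne_zero hχ', analyticAt_update_mul_inv_of_conjInv hφ hχ hχ'⟩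

theorem exists_analyticAt_update_mul_inv (hK : LipschitzWith K φ) (hK' : AntilipschitzWith K' φ)
    (hp : p.natDegree ≠ 0) (hq : q.natDegree ≠ 0) (heq : ∀ t, q.eval (φ t) = p.eval t) :
    ∃ l : ℝ, l ≠ 0 ∧ AnalyticAt ℝ (update (fun u => u * φ u⁻¹) 0 l) 0 := by
  obtain ⟨l, hl, hψ⟩ := exists_analyticAt_update_mul_inv_of_map_zero
    (φ := fun t => φ t - φ 0) (p := p - C (p.eval 0))
    (q := q.comp (X + C (φ 0)) - C (q.eval (φ 0)))
    (.of_dist_le_mul fun x y => by simpa using hK.dist_le_mul x y)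
    (.of_le_mul_dist fun x y => by simpa using hK'.le_mul_dist x y)
    (sub_self _) (by simpa using hp) (by simpa [natDegree_comp] using hq) (by simp)
    (fun t => by simp [heq])
  exact ⟨l, hl, analyticAt_update_mul_inv_of_sub_const hψ⟩

end BiLipschitz

/-- If `φ` is a bi-Lipschitz homeomorphism of `ℝ` with `g ∘ φ = f` for nonconstant
polynomial functions `f, g`, then `φ(t)/t → l ≠ 0` as `|t| → +∞`, and the function
`ψ(t) = t·φ(1/t)` for `t ≠ 0`, `ψ(0) = l`, is real-analytic on all of `ℝ`. -/
theorem stmt_13 (φ : ℝ → ℝ) (hφbij : Function.Bijective φ)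
    (hφlip : ∃ K : NNReal, LipschitzWith K φ)
    (hφinv : ∃ K : NNReal, LipschitzWith K (Function.invFun φ))
    (p q : Polynomial ℝ) (hp : 1 ≤ p.natDegree) (hq : 1 ≤ q.natDegree)
    (heq : ∀ t : ℝ, q.eval (φ t) = p.eval t) :
    ∃ l : ℝ, l ≠ 0 ∧
      Tendsto (fun t => φ t / t) atTop (𝓝 l) ∧
      Tendsto (fun t => φ t / t) atBot (𝓝 l) ∧
      ∀ t : ℝ, AnalyticAt ℝ (fun u : ℝ => if u = 0 then l else u * φ u⁻¹) t := by
  obtain ⟨K, hK⟩ := hφlip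
  obtain ⟨K', hK'_inv⟩ := hφinv
  have hK' : AntilipschitzWith K' φ :=
    hK'_inv.to_rightInverse (Function.leftInverse_invFun hφbij.injective)
  have hp₀ : p.natDegree ≠ 0 := Nat.one_le_iff_ne_zero.1 hp
  have hq₀ : q.natDegree ≠ 0 := Nat.one_le_iff_ne_zero.1 hq
  obtain ⟨l, hl, hψ⟩ := exists_analyticAt_update_mul_inv hK hK' hp₀ hq₀ heq
  have hlim := tendsto_div_cobounded_of_continuousAt_update hψ.continuousAt
  rw [IsOrderBornology.cobounded_eq, tendsto_sup] at hlim
  refine ⟨l, hl, hlim.2, hlim.1, fun t => ?_⟩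
  simp only [← Function.update_apply (fun u : ℝ => u * φ u⁻¹)]
  rcases eq_or_ne t 0 with rfl | ht
  · exact hψ
  · exact analyticAt_update_mul_inv_of_ne_zero ht (analyticAt_of_eval_eq hK hK' hq₀ heq t⁻¹)
end

section
/- Let β = r/s be a rational number with r > s > 0 and gcd(r, s) = 1, and let F, G ∈ ℝ[X, Y] be β-quasihomogeneous polynomials of degree d ≥ 1 with height functions f₊, f₋ and g₊, g₋ respectively. Suppose there exist nonzero real numbers λ₁, λ₂ with λ₁λ₂ > 0 and bi-Lipschitz homeomorphisms φ₁, φ₂ : ℝ → ℝ such that: if λ₁ > 0 and λ₂ > 0 then |λ₁|^d·(g₊ ∘ φ₁) = f₊ and |λ₂|^d·(g₋ ∘ φ₂) = f₋, while if λ₁ < 0 and λ₂ < 0 then |λ₁|^d·(g₋ ∘ φ₁) = f₊ and |λ₂|^d·(g₊ ∘ φ₂) = f₋. Then the multiplicity of X as a factor of F equals the multiplicity of X as a factor of G. -/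
open Filter Topology

/-!
Every monomial `X ^ i * Y ^ j` of a `β`-quasihomogeneous polynomial of degree `d` satisfies
`i + β j = d`, so the smallest `i` comes with the largest `j`: the multiplicity `e` of `X` and the
degree `n` of a height function satisfy `e + β n = d`. A map of at most linear growth cannot raise
the degree of a polynomial by composition, so height functions related by a bi-Lipschitz
homeomorphism have the same degree, and `e` is determined by that degree.
-/

open MvPolynomial Asymptotics Bornology

theorem X_pow_dvd_iff_forall_mem_support {ι R : Type*} [CommSemiring R] {F : MvPolynomial ι R}
    {i : ι} {n : ℕ} : X i ^ n ∣ F ↔ ∀ m ∈ F.support, n ≤ m i := by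
  simp only [X_pow_eq_monomial, monomial_one_dvd_iff_modMonomial_eq_zero, MvPolynomial.ext_iff,
    coeff_zero]
  refine forall_congr' fun m ↦ ?_
  by_cases hm : Finsupp.single i n ≤ m
  · simp [coeff_modMonomial_of_le F hm, Finsupp.single_le_iff.1 hm]
  · simp [coeff_modMonomial_of_not_le F hm, mt Finsupp.single_le_iff.2 hm]

theorem exists_mem_support_apply_eq_of_emultiplicity_X_eq {ι R : Type*} [CommSemiring R]
    {F : MvPolynomial ι R} {i : ι} {e : ℕ} (he : emultiplicity (X i) F = e) :
    ∃ m ∈ F.support, m i = e ∧ ∀ m' ∈ F.support, e ≤ m' i := by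
  simp only [emultiplicity_eq_coe, X_pow_dvd_iff_forall_mem_support, not_forall, not_le] at he
  obtain ⟨hle, m, hm, hlt⟩ := he
  exact ⟨m, hm, le_antisymm (Nat.lt_succ_iff.1 hlt) (hle m hm), hle⟩

theorem coeff_aeval_C_mul_X {ι R : Type*} [CommSemiring R] (c : ι → R) (F : MvPolynomial ι R)
    (m : ι →₀ ℕ) :
    coeff m (aeval (fun i ↦ C (c i) * X i) F) = (m.prod fun i n ↦ c i ^ n) * coeff m F := by
  classical
  induction F using MvPolynomial.induction_on' with
  | monomial m' a =>
    have h : aeval (fun i ↦ C (c i) * X i) (monomial m' a) =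
        monomial m' ((m'.prod fun i n ↦ c i ^ n) * a) := by
      simp only [aeval_monomial, mul_pow, Finsupp.prod_mul, algebraMap_eq, ← C_pow]
      rw [monomial_eq, C_mul, mul_left_comm, ← mul_assoc]
      simp [Finsupp.prod, map_prod]
    rw [h, coeff_monomial, coeff_monomial]
    split_ifs with hm <;> simp [hm]
  | add p q hp hq => rw [map_add, coeff_add, hp, hq, coeff_add, mul_add]

theorem isWeightedHomogeneous_of_eval_rpow_mul {ι : Type*} {w : ι → ℝ} {d t : ℝ}
    {F : MvPolynomial ι ℝ} (ht : 0 < t) (ht1 : t ≠ 1)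
    (h : ∀ x, eval (fun i ↦ t ^ w i * x i) F = t ^ d * eval x F) :
    F.IsWeightedHomogeneous w d := by
  have hscale : aeval (fun i ↦ C (t ^ w i) * X i) F = C (t ^ d) * F := by
    refine MvPolynomial.funext fun x ↦ ?_
    rw [map_mul, eval_C, ← h, ← aeval_eq_eval, ← aeval_eq_eval, ← AlgHom.comp_apply, comp_aeval]
    simp
  intro m hm
  have hcoeff : (m.prod fun i n ↦ (t ^ w i) ^ n) * coeff m F = t ^ d * coeff m F := by
    rw [← coeff_aeval_C_mul_X, hscale, coeff_C_mul]
  have hweight : (m.prod fun i n ↦ (t ^ w i) ^ n) = t ^ Finsupp.weight w m := by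
    simp only [Finsupp.weight_apply, Finsupp.sum, Finsupp.prod, nsmul_eq_mul,
      Real.rpow_sum_of_pos ht, mul_comm _ (w _), Real.rpow_mul_natCast ht.le]
  rw [hweight] at hcoeff
  exact (Real.rpow_right_inj ht ht1).1 (mul_right_cancel₀ hm hcoeff)

theorem isWeightedHomogeneous_of_eval2 {β : ℝ} {d : ℕ} {F : MvPolynomial (Fin 2) ℝ}
    (hF : ∀ t x y : ℝ, 0 < t → eval2 F (t * x) (t ^ β * y) = t ^ d * eval2 F x y) :
    F.IsWeightedHomogeneous ![1, β] (d : ℝ) := by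
  refine isWeightedHomogeneous_of_eval_rpow_mul (t := 2) two_pos (by norm_num) fun x ↦ ?_
  have hx : ![x 0, x 1] = x := by ext i; fin_cases i <;> rfl
  have hscale : (fun i ↦ (2 : ℝ) ^ ![1, β] i * x i) = ![2 * x 0, 2 ^ β * x 1] := by
    ext i; fin_cases i <;> simp
  simpa only [eval2, hx, hscale, Real.rpow_natCast] using hF 2 (x 0) (x 1) two_pos

section HeightPoly

variable {R : Type*} [CommSemiring R]

/-- The restriction `F(a, Y)` of `F(X, Y)` to the line `X = a`, as a univariate polynomial; the
height functions `f₊` and `f₋` are its evaluations for `a = 1` and `a = -1`. -/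
noncomputable def heightPoly (F : MvPolynomial (Fin 2) R) (a : R) : Polynomial R :=
  aeval ![Polynomial.C a, Polynomial.X] F

theorem eval_heightPoly (F : MvPolynomial (Fin 2) R) (a y : R) :
    (heightPoly F a).eval y = eval ![a, y] F := by
  rw [heightPoly, ← Polynomial.coe_aeval_eq_eval, ← AlgHom.comp_apply, comp_aeval, ← aeval_eq_eval]
  congr 2
  ext i
  fin_cases i <;> simp

theorem coeff_heightPoly (F : MvPolynomial (Fin 2) R) (a : R) (n : ℕ) :
    (heightPoly F a).coeff n = ∑ m ∈ F.support with m 1 = n, coeff m F * a ^ m 0 := by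
  rw [heightPoly, aeval_def, eval₂_eq', Polynomial.finsetSum_coeff, Finset.sum_filter]
  refine Finset.sum_congr rfl fun m _ ↦ ?_
  simp only [Fin.prod_univ_two, Matrix.cons_val_zero, Matrix.cons_val_one, ← Polynomial.C_pow,
    Polynomial.algebraMap_eq, ← mul_assoc, ← Polynomial.C_mul, Polynomial.coeff_C_mul_X_pow,
    eq_comm]

variable {β d : ℝ} {F : MvPolynomial (Fin 2) R}

theorem exponent_add_mul_exponent_eq (hF : F.IsWeightedHomogeneous ![1, β] d) {m : Fin 2 →₀ ℕ}
    (hm : m ∈ F.support) : (m 0 : ℝ) + β * m 1 = d := by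
  simpa [Finsupp.weight_apply, Finsupp.sum_fintype, Fin.sum_univ_two, mul_comm] using
    hF (mem_support_iff.1 hm)

theorem coeff_heightPoly_of_mem_support (hF : F.IsWeightedHomogeneous ![1, β] d) (a : R)
    {m : Fin 2 →₀ ℕ} (hm : m ∈ F.support) :
    (heightPoly F a).coeff (m 1) = coeff m F * a ^ m 0 := by
  have huniq : ∀ m' ∈ F.support, m' 1 = m 1 → m' = m := by
    intro m' hm' h1
    have h0 : (m' 0 : ℝ) = m 0 := by
      have h := exponent_add_mul_exponent_eq hF hm'
      rw [h1, ← exponent_add_mul_exponent_eq hF hm] at h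
      exact add_right_cancel h
    ext i
    fin_cases i
    exacts [mod_cast h0, h1]
  have hfilter : {m' ∈ F.support | m' 1 = m 1} = {m} := by
    ext m'
    simp only [Finset.mem_filter, Finset.mem_singleton]
    exact ⟨fun h ↦ huniq m' h.1 h.2, by rintro rfl; exact ⟨hm, rfl⟩⟩
  rw [coeff_heightPoly, hfilter, Finset.sum_singleton]

theorem emultiplicity_add_mul_natDegree_heightPoly [NoZeroDivisors R] (hβ : 0 < β)
    (hF : F.IsWeightedHomogeneous ![1, β] d) {e : ℕ} (he : emultiplicity (X 0) F = e) {a : R}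
    (ha : a ≠ 0) : (e : ℝ) + β * (heightPoly F a).natDegree = d := by
  obtain ⟨m, hm, rfl, hmin⟩ := exists_mem_support_apply_eq_of_emultiplicity_X_eq he
  have hmax : ∀ m' ∈ F.support, m' 1 ≤ m 1 := by
    intro m' hm'
    have h0 : (m 0 : ℝ) ≤ m' 0 := mod_cast hmin m' hm'
    have h1 : β * m' 1 ≤ β * m 1 := by
      linarith [exponent_add_mul_exponent_eq hF hm, exponent_add_mul_exponent_eq hF hm']
    exact_mod_cast le_of_mul_le_mul_left h1 hβ
  have hne : (heightPoly F a).coeff (m 1) ≠ 0 := by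
    rw [coeff_heightPoly_of_mem_support hF a hm]
    exact mul_ne_zero (mem_support_iff.1 hm) (pow_ne_zero _ ha)
  have hdegree : (heightPoly F a).natDegree = m 1 := by
    refine Polynomial.natDegree_eq_of_le_of_coeff_ne_zero ?_ hne
    refine Polynomial.natDegree_le_iff_coeff_eq_zero.2 fun n hn ↦ ?_
    rw [coeff_heightPoly, Finset.filter_false_of_mem, Finset.sum_empty]
    exact fun m' hm' ↦ ((hmax m' hm').trans_lt hn).ne
  rw [hdegree, exponent_add_mul_exponent_eq hF hm]

end HeightPoly

section Growth

theorem isBigO_cobounded_id_of_lipschitzWith {E E' : Type*} [NormedAddCommGroup E]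
    [NormedAddCommGroup E'] {K : NNReal} {φ : E → E'} (hφ : LipschitzWith K φ) :
    φ =O[cobounded E] id := by
  have hsub : (fun x ↦ φ x - φ 0) =O[cobounded E] id :=
    .of_bound K (.of_forall fun x ↦ by simpa using hφ.norm_sub_le x 0)
  simpa using hsub.add (isLittleO_const_id_cobounded (φ 0)).isBigO

variable {𝕜 : Type*} [NontriviallyNormedField 𝕜] {p q : Polynomial 𝕜} {φ ψ : 𝕜 → 𝕜}

theorem isBigO_cobounded_eval_comp (q : Polynomial 𝕜) (hφ : φ =O[cobounded 𝕜] id) :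
    (fun t ↦ q.eval (φ t)) =O[cobounded 𝕜] (· ^ q.natDegree) := by
  simp only [Polynomial.eval_eq_sum_range]
  refine .fun_sum fun i hi ↦ IsBigO.trans ((hφ.pow i).const_mul_left (q.coeff i)) ?_
  exact isBigO_pow_pow_cobounded_of_le (Nat.lt_succ_iff.1 (Finset.mem_range.1 hi))

theorem natDegree_le_of_isBigO_cobounded_pow {n : ℕ}
    (hp : p.eval =O[cobounded 𝕜] (· ^ n)) : p.natDegree ≤ n := by
  by_contra! hn
  have hp0 : p ≠ 0 := Polynomial.ne_zero_of_natDegree_gt hn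
  have hlittle : (· ^ n) =o[cobounded 𝕜] p.eval := by
    simpa using Polynomial.isLittleO_cobounded_of_degree_lt (P := Polynomial.X ^ n) (Q := p)
      (by simpa [Polynomial.degree_eq_natDegree hp0] using hn)
  have hroot : ∀ᶠ t in cobounded 𝕜, ‖p.eval t‖ ≠ 0 :=
    ((Polynomial.eventually_cofinite_not_isRoot hp0).filter_mono (le_cofinite 𝕜)).mono
      fun t ht ↦ norm_ne_zero_iff.2 ht
  exact isLittleO_irrefl' hroot.frequently (hp.trans_isLittleO hlittle)

theorem natDegree_le_of_eval_eq_eval_comp (hφ : φ =O[cobounded 𝕜] id)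
    (h : ∀ t, p.eval t = q.eval (φ t)) : p.natDegree ≤ q.natDegree :=
  natDegree_le_of_isBigO_cobounded_pow <| (isBigO_cobounded_eval_comp q hφ).congr_left (h · |>.symm)

theorem natDegree_eq_of_eval_eq_mul_eval_comp {k : 𝕜} (hk : k ≠ 0) (hψφ : Function.RightInverse ψ φ)
    (hφ : φ =O[cobounded 𝕜] id) (hψ : ψ =O[cobounded 𝕜] id)
    (h : ∀ t, k * q.eval (φ t) = p.eval t) : p.natDegree = q.natDegree := by
  rw [← Polynomial.natDegree_C_mul (p := q) hk]
  refine le_antisymm (natDegree_le_of_eval_eq_eval_comp hφ fun t ↦ ?_)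
    (natDegree_le_of_eval_eq_eval_comp hψ fun t ↦ ?_) <;> simp [← h, hψφ _]

end Growth

theorem stmt_14_general {𝕜 : Type*} [NontriviallyNormedField 𝕜] {β d : ℝ} (hβ : 0 < β)
    {F G : MvPolynomial (Fin 2) 𝕜} (hF : F.IsWeightedHomogeneous ![1, β] d)
    (hG : G.IsWeightedHomogeneous ![1, β] d) {eF eG : ℕ} (heF : emultiplicity (X 0) F = eF)
    (heG : emultiplicity (X 0) G = eG) {a b k : 𝕜} (ha : a ≠ 0) (hb : b ≠ 0) (hk : k ≠ 0)
    {φ ψ : 𝕜 → 𝕜} (hψφ : Function.RightInverse ψ φ) (hφ : φ =O[cobounded 𝕜] id)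
    (hψ : ψ =O[cobounded 𝕜] id) (h : ∀ t, k * eval ![b, φ t] G = eval ![a, t] F) : eF = eG := by
  have hdegree : (heightPoly F a).natDegree = (heightPoly G b).natDegree :=
    natDegree_eq_of_eval_eq_mul_eval_comp hk hψφ hφ hψ (by simpa only [eval_heightPoly] using h)
  have hFd := emultiplicity_add_mul_natDegree_heightPoly hβ hF heF ha
  have hGd := emultiplicity_add_mul_natDegree_heightPoly hβ hG heG hb
  rw [hdegree, ← hGd] at hFd
  exact_mod_cast add_right_cancel hFd

/-- If the height functions of two β-quasihomogeneous polynomials `F, G` of degree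
`d ≥ 1` can be arranged in pairs related by a proto-transition, then the multiplicity
of `X` as a factor of `F` equals the multiplicity of `X` as a factor of `G`. -/
theorem stmt_14 (r s d : ℕ) (hrs : s < r) (hs : 0 < s) (hgcd : Nat.gcd r s = 1)
    (hd : 1 ≤ d) (β : ℝ) (hβ : β = (r : ℝ) / (s : ℝ))
    (F G : MvPolynomial (Fin 2) ℝ)
    (hF : ∀ t x y : ℝ, 0 < t → eval2 F (t * x) (t ^ β * y) = t ^ d * eval2 F x y)
    (hG : ∀ t x y : ℝ, 0 < t → eval2 G (t * x) (t ^ β * y) = t ^ d * eval2 G x y)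
    (eF eG : ℕ)
    (heF : (MvPolynomial.X 0 : MvPolynomial (Fin 2) ℝ) ^ eF ∣ F ∧
      ¬ (MvPolynomial.X 0 : MvPolynomial (Fin 2) ℝ) ^ (eF + 1) ∣ F)
    (heG : (MvPolynomial.X 0 : MvPolynomial (Fin 2) ℝ) ^ eG ∣ G ∧
      ¬ (MvPolynomial.X 0 : MvPolynomial (Fin 2) ℝ) ^ (eG + 1) ∣ G)
    (l1 l2 : ℝ) (hl1 : l1 ≠ 0) (hl2 : l2 ≠ 0) (hll : 0 < l1 * l2)
    (φ1 φ2 : ℝ → ℝ)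
    (hφ1bij : Function.Bijective φ1) (hφ1lip : ∃ K : NNReal, LipschitzWith K φ1)
    (hφ1inv : ∃ K : NNReal, LipschitzWith K (Function.invFun φ1))
    (hφ2bij : Function.Bijective φ2) (hφ2lip : ∃ K : NNReal, LipschitzWith K φ2)
    (hφ2inv : ∃ K : NNReal, LipschitzWith K (Function.invFun φ2))
    (hpos : 0 < l1 → 0 < l2 →
      (∀ t : ℝ, |l1| ^ d * eval2 G 1 (φ1 t) = eval2 F 1 t) ∧
      (∀ t : ℝ, |l2| ^ d * eval2 G (-1) (φ2 t) = eval2 F (-1) t))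
    (hneg : l1 < 0 → l2 < 0 →
      (∀ t : ℝ, |l1| ^ d * eval2 G (-1) (φ1 t) = eval2 F 1 t) ∧
      (∀ t : ℝ, |l2| ^ d * eval2 G 1 (φ2 t) = eval2 F (-1) t)) :
    eF = eG := by
  have hβ0 : 0 < β := hβ ▸ div_pos (mod_cast hs.trans hrs) (mod_cast hs)
  obtain ⟨K, hφ⟩ := hφ1lip
  obtain ⟨L, hψ⟩ := hφ1inv
  obtain ⟨b, hb, h⟩ : ∃ b ≠ 0, ∀ t, |l1| ^ d * eval2 G b (φ1 t) = eval2 F 1 t := by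
    rcases hl1.lt_or_gt with h1 | h1
    · exact ⟨-1, by norm_num, (hneg h1 (neg_of_mul_pos_right hll h1.le)).1⟩
    · exact ⟨1, one_ne_zero, (hpos h1 (pos_of_mul_pos_right hll h1.le)).1⟩
  exact stmt_14_general hβ0 (isWeightedHomogeneous_of_eval2 hF) (isWeightedHomogeneous_of_eval2 hG)
    (emultiplicity_eq_coe.2 heF) (emultiplicity_eq_coe.2 heG) one_ne_zero hb (by positivity)
    (Function.rightInverse_invFun hφ1bij.2) (isBigO_cobounded_id_of_lipschitzWith hφ)
    (isBigO_cobounded_id_of_lipschitzWith hψ) h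
end

section
/- Let F(X, Y) = a·X^d and G(X, Y) = b·X^d, where a, b are nonzero real numbers and d ≥ 1. (i) If d is even, then there exist a neighborhood U of the origin in ℝ² and an injective map Φ : U → ℝ² with Φ(0) = 0 that is bi-Lipschitz onto its image and satisfies G(Φ(x, y)) = F(x, y) for all (x, y) ∈ U, if and only if a and b have the same sign (a·b > 0). (ii) If d is odd, then such U and Φ always exist. -/
open Filter Topology

/-- `F` and `G` are (ℛ-)Lipschitz equivalent near the origin: there is a neighborhood
`U` of `0 ∈ ℝ²` and an injective map `Φ : U → ℝ²` fixing the origin, bi-Lipschitz onto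
its image, with `G ∘ Φ = F` on `U`. -/
def LocalLipEquiv (F G : ℝ × ℝ → ℝ) : Prop :=
  ∃ U ∈ nhds (0 : ℝ × ℝ), ∃ Φ : ℝ × ℝ → ℝ × ℝ,
    Set.InjOn Φ U ∧ Φ 0 = 0 ∧ (∃ K : NNReal, LipschitzOnWith K Φ U) ∧
    (∃ A : ℝ, 0 < A ∧ ∀ p ∈ U, ∀ q ∈ U, A * dist p q ≤ dist (Φ p) (Φ q)) ∧
    ∀ p ∈ U, G (Φ p) = F p

/-!
An equivalence `Φ` yields a real root: evaluating `G ∘ Φ = F` at a point `(t, 0)` near the origin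
with `t ≠ 0`, and writing `x` for the first coordinate of `Φ (t, 0)`, gives `b x ^ d = a t ^ d`, so
`c = x / t` satisfies `b c ^ d = a`. Conversely, a nonzero such `c` makes the linear isomorphism
`(x, y) ↦ (c x, y)` an equivalence. Thus everything reduces to whether `a / b` has a real `d`-th
root.
-/

theorem exists_pow_eq_iff_nonneg_of_even {d : ℕ} (hd : Even d) (hd₀ : d ≠ 0) {r : ℝ} :
    (∃ c : ℝ, c ^ d = r) ↔ 0 ≤ r := by
  constructor
  · rintro ⟨c, rfl⟩
    exact hd.pow_nonneg c
  · exact fun hr ↦ ⟨r ^ (d⁻¹ : ℝ), Real.rpow_inv_natCast_pow hr hd₀⟩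

theorem exists_pow_eq_of_odd {d : ℕ} (hd : Odd d) (r : ℝ) : ∃ c : ℝ, c ^ d = r := by
  rcases le_total 0 r with hr | hr
  · exact ⟨r ^ (d⁻¹ : ℝ), Real.rpow_inv_natCast_pow hr hd.pos.ne'⟩
  · refine ⟨-(-r) ^ (d⁻¹ : ℝ), ?_⟩
    rw [hd.neg_pow, Real.rpow_inv_natCast_pow (neg_nonneg.2 hr) hd.pos.ne', neg_neg]

namespace LocalLipEquiv

open scoped NNReal

theorem of_lipschitzWith_of_antilipschitzWith {F G : ℝ × ℝ → ℝ} {Φ : ℝ × ℝ → ℝ × ℝ} {K A : ℝ≥0}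
    (hK : LipschitzWith K Φ) (hA : AntilipschitzWith A Φ) (h₀ : Φ 0 = 0)
    (h : ∀ᶠ p in 𝓝 0, G (Φ p) = F p) : LocalLipEquiv F G :=
  ⟨{p | G (Φ p) = F p}, h, Φ, hA.injective.injOn, h₀, ⟨K, hK.lipschitzOnWith⟩,
    ⟨(A : ℝ)⁻¹, inv_pos.2 hA.pos, fun p _ q _ ↦ hA.mul_le_dist p q⟩, fun _ hp ↦ hp⟩

theorem eventually_mem_range {F G : ℝ × ℝ → ℝ} (h : LocalLipEquiv F G) :
    ∀ᶠ p in 𝓝 0, F p ∈ Set.range G := by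
  obtain ⟨U, hU, Φ, -, -, -, -, hΦ⟩ := h
  filter_upwards [hU] with p hp using ⟨Φ p, hΦ p hp⟩

variable {a b : ℝ} {d : ℕ}

theorem of_mul_pow_eq {c : ℝ} (hc : c ≠ 0) (h : b * c ^ d = a) :
    LocalLipEquiv (fun p ↦ a * p.1 ^ d) (fun p ↦ b * p.1 ^ d) := by
  let e : (ℝ × ℝ) ≃L[ℝ] ℝ × ℝ :=
    (ContinuousLinearEquiv.unitsEquivAut ℝ (Units.mk0 c hc)).prodCongr (.refl ℝ ℝ)
  refine of_lipschitzWith_of_antilipschitzWith e.lipschitz e.antilipschitz e.map_zero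
    (.of_forall fun p ↦ ?_)
  calc b * (p.1 * c) ^ d = b * c ^ d * p.1 ^ d := by ring
    _ = a * p.1 ^ d := by rw [h]

theorem exists_mul_pow_eq (h : LocalLipEquiv (fun p ↦ a * p.1 ^ d) (fun p ↦ b * p.1 ^ d)) :
    ∃ c : ℝ, b * c ^ d = a := by
  have h_axis : Tendsto (fun t : ℝ ↦ (t, (0 : ℝ))) (𝓝[≠] 0) (𝓝 0) :=
    (Continuous.prodMk_left (0 : ℝ)).continuousAt.tendsto.mono_left nhdsWithin_le_nhds
  obtain ⟨t, ⟨q, hq⟩, ht⟩ :=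
    ((h_axis.eventually h.eventually_mem_range).and self_mem_nhdsWithin).exists
  have ht₀ : t ^ d ≠ 0 := pow_ne_zero d ht
  refine ⟨q.1 / t, ?_⟩
  rw [div_pow, ← mul_div_assoc, div_eq_iff ht₀]
  exact hq

end LocalLipEquiv

theorem localLipEquiv_mul_pow_iff {a b : ℝ} {d : ℕ} (ha : a ≠ 0) (hb : b ≠ 0) (hd : d ≠ 0) :
    LocalLipEquiv (fun p ↦ a * p.1 ^ d) (fun p ↦ b * p.1 ^ d) ↔ ∃ c : ℝ, c ^ d = a / b := by
  simp only [eq_div_iff hb, mul_comm _ b]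
  refine ⟨LocalLipEquiv.exists_mul_pow_eq, fun ⟨c, hc⟩ ↦ .of_mul_pow_eq ?_ hc⟩
  rintro rfl
  exact ha (by rw [← hc, zero_pow hd, mul_zero])

/-- For `F = a·X^d` and `G = b·X^d` with `a, b ≠ 0`: if `d` is even, `F` and `G` are
Lipschitz equivalent near the origin iff `a` and `b` have the same sign; if `d` is odd,
they always are. -/
theorem stmt_16 (a b : ℝ) (ha : a ≠ 0) (hb : b ≠ 0) (d : ℕ) (hd : 1 ≤ d) :
    (Even d →
      (LocalLipEquiv (fun p => a * p.1 ^ d) (fun p => b * p.1 ^ d) ↔ 0 < a * b)) ∧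
    (Odd d → LocalLipEquiv (fun p => a * p.1 ^ d) (fun p => b * p.1 ^ d)) := by
  have hd₀ : d ≠ 0 := Nat.one_le_iff_ne_zero.1 hd
  rw [localLipEquiv_mul_pow_iff ha hb hd₀]
  refine ⟨fun h_even ↦ ?_, fun h_odd ↦ exists_pow_eq_of_odd h_odd (a / b)⟩
  calc (∃ c : ℝ, c ^ d = a / b) ↔ 0 ≤ a / b := exists_pow_eq_iff_nonneg_of_even h_even hd₀
    _ ↔ 0 < a / b := (div_ne_zero ha hb).symm.le_iff_lt
    _ ↔ 0 < a * b := div_pos_iff.trans mul_pos_iff.symm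
end
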